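/- arXiv:1305.2897 — 3 statements merged into one kernel-verified Lean document; each statement's English description precedes it below -/
import Mathlib

section
/- Let f_δ(t) = e^{−t²/2} e(δt) for t > 0, where δ ∈ ℝ, and let F_δ = M f_δ be its Mellin transform. Let s = σ + iτ with σ ∈ [0,1] and |τ| ≥ max(100, 4π²|δ|). Then for each integer k with 0 ≤ k ≤ 2, |F_δ(s+k)| + |F_δ(k+1−s)| ≤ c_k · (|τ|/(2π|δ|))^k · e^{−0.1065(τ/(πδ))²} if |τ| < (3/2)(πδ)², and |F_δ(s+k)| + |F_δ(k+1−s)| ≤ c_k · |τ|^{k/2} · e^{−0.1598|τ|} if |τ| ≥ (3/2)(πδ)², where c₀ = 4.226, c₁ = 3.516, c₂ = 3.262. -/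
open MeasureTheory Set

/-- `e(t) = e^{2πit}`. -/
noncomputable def e2pi (t : ℝ) : ℂ := Complex.exp (2 * Real.pi * Complex.I * t)

/-- `F_δ`, the Mellin transform of the twisted Gaussian `f_δ(t) = e^{-t²/2} e(δt)`. -/
noncomputable def Fdelta (δ : ℝ) (s : ℂ) : ℂ :=
  mellin (fun t => (Real.exp (-t^2 / 2) : ℂ) * e2pi (δ * t)) s

/-- The constants `c₀ = 4.226`, `c₁ = 3.516`, `c₂ = 3.262`. -/
noncomputable def ckconst (k : ℕ) : ℝ := if k = 0 then 4.226 else if k = 1 then 3.516 else 3.262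

/-!
In the coordinate `z = log t` the Mellin integrand of `exp (a t² + b t)` is entire, so the path of
integration may be rotated from the positive half-line to the ray of argument `θ`. For
`exp (-t² / 2 + iℓt)` this gains the factor `exp (-θ Im s)`, while the Gaussian becomes
`exp (-cos (2θ) t² / 2 - ℓ sin θ t)` in absolute value. Completing the square and applying Jensen's
inequality to the `q`-th absolute moment of a Gaussian, `0 ≤ q ≤ 2`, bounds what remains when
`1 ≤ Re s ≤ 3`; the strip `0 ≤ Re s ≤ 1` is reduced to this range by the functional equation that
comes from integrating by parts.

With `ℓ = 2π|δ|` and `T = |τ|`, complex conjugation turns the two terms of the theorem into the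
transforms for `ℓ` and `-ℓ` at points of imaginary part `T`. The first is negligible because its
linear term `-ℓ sin θ t` is favourable. The second has exponent about `-Tθ + 0.5762 (ℓθ)²`, which
is small for `θ = 0.752 T / ℓ²`. For `T = 3ℓ² / 8` this is `θ = 0.282`, the angle then kept for all
larger `T`.
-/

open Filter Topology ProbabilityTheory
open scoped ComplexConjugate NNReal

section LogarithmicCoordinate

variable {E : Type*} [NormedAddCommGroup E] [NormedSpace ℝ E]

lemma integral_Ioi_zero_eq_integral_exp_smul (g : ℝ → E) :
    ∫ x in Ioi (0 : ℝ), g x = ∫ v : ℝ, Real.exp v • g (Real.exp v) := by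
  simpa [Real.range_exp, abs_of_pos (Real.exp_pos _)] using
    integral_image_eq_integral_abs_deriv_smul MeasurableSet.univ
      (fun x _ => (Real.hasDerivAt_exp x).hasDerivWithinAt) Real.exp_injective.injOn g

lemma integrableOn_Ioi_zero_iff_integrable_exp_smul (g : ℝ → E) :
    IntegrableOn g (Ioi 0) ↔ Integrable fun v : ℝ => Real.exp v • g (Real.exp v) := by
  simpa [Real.range_exp, abs_of_pos (Real.exp_pos _)] using
    integrableOn_image_iff_integrableOn_abs_deriv_smul MeasurableSet.univ
      (fun x _ => (Real.hasDerivAt_exp x).hasDerivWithinAt) Real.exp_injective.injOn g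

end LogarithmicCoordinate

section ContourShift

variable {E : Type*} [NormedAddCommGroup E] [NormedSpace ℂ E]

lemma tendsto_intervalIntegral_vertical_of_norm_le {f : ℂ → E} {θ : ℝ} {g : ℝ → ℝ}
    {l : Filter ℝ} (hg : Tendsto g l (𝓝 0))
    (hfg : ∀ v : ℝ, ∀ y ∈ uIcc 0 θ, ‖f (v + y * Complex.I)‖ ≤ g v) :
    Tendsto (fun R : ℝ => ∫ y in (0 : ℝ)..θ, f (R + y * Complex.I)) l (𝓝 0) := by
  refine squeeze_zero_norm (fun R => intervalIntegral.norm_integral_le_of_norm_le_const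
    fun y hy => hfg R y (uIoc_subset_uIcc hy)) ?_
  simpa using hg.mul_const |θ - 0|

lemma integral_add_mul_I_eq_of_norm_le [CompleteSpace E] {f : ℂ → E} {θ : ℝ} {g : ℝ → ℝ}
    (hf : Differentiable ℂ f) (hg : Integrable g) (hg_zero : Tendsto g (cocompact ℝ) (𝓝 0))
    (hfg : ∀ v : ℝ, ∀ y ∈ uIcc 0 θ, ‖f (v + y * Complex.I)‖ ≤ g v) :
    ∫ v : ℝ, f (v + θ * Complex.I) = ∫ v : ℝ, f v := by
  have integrable_line (y : ℝ) (hy : y ∈ uIcc 0 θ) :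
      Integrable fun v : ℝ => f (v + y * Complex.I) :=
    hg.mono' (hf.continuous.comp (by fun_prop)).aestronglyMeasurable
      (.of_forall fun v => hfg v y hy)
  have bottom := intervalIntegral_tendsto_integral (integrable_line 0 left_mem_uIcc)
    tendsto_neg_atTop_atBot tendsto_id
  have top := intervalIntegral_tendsto_integral (integrable_line θ right_mem_uIcc)
    tendsto_neg_atTop_atBot tendsto_id
  rw [cocompact_eq_atBot_atTop, tendsto_sup] at hg_zero
  have right := tendsto_intervalIntegral_vertical_of_norm_le hg_zero.2 hfg
  have left := (tendsto_intervalIntegral_vertical_of_norm_le hg_zero.1 hfg).comp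
    tendsto_neg_atTop_atBot
  have boundary_eq_zero (R : ℝ) :
      (∫ x in -R..R, f (x + (0 : ℝ) * Complex.I)) - (∫ x in -R..R, f (x + θ * Complex.I)) +
        Complex.I • (∫ y in (0 : ℝ)..θ, f (R + y * Complex.I)) -
        Complex.I • (∫ y in (0 : ℝ)..θ, f ((-R : ℝ) + y * Complex.I)) = 0 := by
    simpa using Complex.integral_boundary_rect_eq_zero_of_differentiableOn f (-R : ℝ)
      (R + θ * Complex.I) hf.differentiableOn
  have limit := ((bottom.sub top).add (right.const_smul Complex.I)).sub
    (left.const_smul Complex.I)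
  have := tendsto_nhds_unique (limit.congr boundary_eq_zero) tendsto_const_nhds
  exact (sub_eq_zero.1 (by simpa using this)).symm

end ContourShift

section Mellin

variable {E : Type*} [NormedAddCommGroup E] [NormedSpace ℂ E]

lemma not_mellinConvergent_of_tendsto_nhdsGT_zero {f : ℝ → E} {c : E} {s : ℂ}
    (hf : Tendsto f (𝓝[>] 0) (𝓝 c)) (hc : c ≠ 0) (hs : s.re ≤ 0) :
    ¬ MellinConvergent f s := by
  intro h
  obtain ⟨ε, hε : 0 < ε, hεf⟩ := mem_nhdsGT_iff_exists_Ioo_subset.1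
    (hf.norm.eventually (lt_mem_nhds (half_lt_self (norm_pos_iff.2 hc))))
  have rpow_integrable : IntegrableOn (fun t : ℝ => t ^ (s.re - 1)) (Ioo 0 ε) := by
    refine ((Integrable.norm (h.mono_set Ioo_subset_Ioi_self)).const_mul (‖c‖ / 2)⁻¹).mono'
      (by fun_prop) (ae_restrict_of_forall_mem measurableSet_Ioo fun t ht => ?_)
    have hft : ‖c‖ / 2 < ‖f t‖ := hεf ht
    have hc_half : 0 < ‖c‖ / 2 := half_pos (norm_pos_iff.2 hc)
    rw [Real.norm_of_nonneg (Real.rpow_nonneg ht.1.le _), norm_smul,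
      Complex.norm_cpow_eq_rpow_re_of_pos ht.1, le_inv_mul_iff₀ hc_half, mul_comm]
    exact mul_le_mul_of_nonneg_left hft.le (Real.rpow_nonneg ht.1.le _)
  linarith [(intervalIntegral.integrableOn_Ioo_rpow_iff hε).1 rpow_integrable]

lemma norm_mellin_conj (f : ℝ → ℂ) (s : ℂ) :
    ‖mellin f (conj s)‖ = ‖mellin (fun t => conj (f t)) s‖ := by
  rw [← RCLike.norm_conj (mellin f (conj s)), mellin, ← integral_conj, mellin]
  congr 1
  refine setIntegral_congr_fun measurableSet_Ioi fun t (ht : 0 < t) => ?_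
  have harg : (t : ℂ).arg ≠ Real.pi := by
    rw [Complex.arg_ofReal_of_nonneg ht.le]
    exact Real.pi_ne_zero.symm
  have cpow_conj_eq : (t : ℂ) ^ (conj s - 1) = conj ((t : ℂ) ^ (s - 1)) := by
    rw [← Complex.conj_ofReal t, ← Complex.cpow_conj _ _ harg, map_sub, map_one,
      Complex.conj_ofReal]
  simp [cpow_conj_eq]

end Mellin

section ComplexGaussian

/-- The complex Gaussian `t ↦ exp (a t² + b t)`, whose Mellin transform is rotated to other rays by
varying `a` and `b`. -/
noncomputable def cexpQuadratic (a b : ℂ) (t : ℝ) : ℂ := Complex.exp (a * t ^ 2 + b * t)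

/-- The integrand of the Mellin transform of `cexpQuadratic a b` in the coordinate `z = log t`,
extended to an entire function of `z`. -/
noncomputable def logMellinIntegrand (a b s z : ℂ) : ℂ :=
  Complex.exp (s * z + a * Complex.exp (2 * z) + b * Complex.exp z)

variable {a b s : ℂ}

lemma continuous_cexpQuadratic (a b : ℂ) : Continuous (cexpQuadratic a b) := by
  unfold cexpQuadratic
  fun_prop

lemma mellinConvergent_cexpQuadratic (ha : a.re < 0) (hs : 0 < s.re) :
    MellinConvergent (cexpQuadratic a b) s := by
  refine mellinConvergent_of_isBigO_rpow (a := s.re + 1) (b := 0)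
    ((continuous_cexpQuadratic a b).locallyIntegrable.locallyIntegrableOn _)
    (cexp_neg_quadratic_isLittleO_rpow_atTop ha b _).isBigO (by linarith) ?_ hs
  simpa using ((continuous_cexpQuadratic a b).tendsto 0).mono_left nhdsWithin_le_nhds
    |>.isBigO_one ℝ

-- The integral diverges here and takes the junk value `0`; this covers `k = 0`, `σ ∈ {0, 1}`.
lemma mellin_cexpQuadratic_of_re_nonpos (hs : s.re ≤ 0) : mellin (cexpQuadratic a b) s = 0 :=
  integral_undef (not_mellinConvergent_of_tendsto_nhdsGT_zero
    (((continuous_cexpQuadratic a b).tendsto 0).mono_left nhdsWithin_le_nhds)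
    (Complex.exp_ne_zero _) hs)

lemma exp_smul_mellin_integrand_cexpQuadratic (a b s : ℂ) (v : ℝ) :
    Real.exp v • ((Real.exp v : ℂ) ^ (s - 1) • cexpQuadratic a b (Real.exp v)) =
      logMellinIntegrand a b s v := by
  rw [Complex.cpow_def_of_ne_zero (by exact_mod_cast (Real.exp_pos v).ne'), ← Complex.ofReal_log
    (Real.exp_pos v).le, Real.log_exp, cexpQuadratic, logMellinIntegrand, Complex.real_smul,
    smul_eq_mul, Complex.ofReal_exp, ← Complex.exp_nat_mul, ← Complex.exp_add, ← Complex.exp_add]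
  congr 1
  push_cast
  ring

lemma mellin_cexpQuadratic_eq_integral (a b s : ℂ) :
    mellin (cexpQuadratic a b) s = ∫ v : ℝ, logMellinIntegrand a b s v := by
  simp_rw [mellin, integral_Ioi_zero_eq_integral_exp_smul,
    exp_smul_mellin_integrand_cexpQuadratic]

lemma integrable_logMellinIntegrand (ha : a.re < 0) (hs : 0 < s.re) :
    Integrable fun v : ℝ => logMellinIntegrand a b s v := by
  have convergent := mellinConvergent_cexpQuadratic (b := b) ha hs
  rw [MellinConvergent, integrableOn_Ioi_zero_iff_integrable_exp_smul] at convergent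
  simpa only [exp_smul_mellin_integrand_cexpQuadratic] using convergent

lemma differentiable_logMellinIntegrand (a b s : ℂ) :
    Differentiable ℂ (logMellinIntegrand a b s) := by
  unfold logMellinIntegrand
  fun_prop

lemma logMellinIntegrand_add_param (a b s w z : ℂ) :
    logMellinIntegrand a b (s + w) z = Complex.exp (w * z) * logMellinIntegrand a b s z := by
  rw [logMellinIntegrand, logMellinIntegrand, ← Complex.exp_add]
  ring_nf

lemma hasDerivAt_logMellinIntegrand (a b s : ℂ) (v : ℝ) :
    HasDerivAt (fun v : ℝ => logMellinIntegrand a b s v)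
      (s * logMellinIntegrand a b s v + 2 * a * logMellinIntegrand a b (s + 2) v +
        b * logMellinIntegrand a b (s + 1) v) v := by
  have exponent_deriv : HasDerivAt
      (fun z : ℂ => s * z + a * Complex.exp (2 * z) + b * Complex.exp z)
      (s + a * (Complex.exp (2 * v) * 2) + b * Complex.exp v) v := by
    simpa using (((hasDerivAt_id' (v : ℂ)).const_mul s).fun_add
      ((((hasDerivAt_id' (v : ℂ)).const_mul 2).cexp).const_mul a)).fun_add
        ((Complex.hasDerivAt_exp (v : ℂ)).const_mul b)
  refine exponent_deriv.cexp.comp_ofReal.congr_deriv ?_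
  rw [logMellinIntegrand_add_param, logMellinIntegrand_add_param, one_mul, logMellinIntegrand]
  ring

lemma integrable_deriv_logMellinIntegrand (ha : a.re < 0) (hs : 0 < s.re) :
    Integrable fun v : ℝ => s * logMellinIntegrand a b s v +
      2 * a * logMellinIntegrand a b (s + 2) v + b * logMellinIntegrand a b (s + 1) v :=
  ((integrable_logMellinIntegrand ha hs).const_mul _ |>.add <|
    (integrable_logMellinIntegrand ha (by simp; linarith)).const_mul _).add <|
      (integrable_logMellinIntegrand ha (by simp; linarith)).const_mul _

lemma tendsto_logMellinIntegrand_cocompact (ha : a.re < 0) (hs : 0 < s.re) :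
    Tendsto (fun v : ℝ => logMellinIntegrand a b s v) (cocompact ℝ) (𝓝 0) := by
  have integrable := integrable_logMellinIntegrand (b := b) ha hs
  have deriv_integrable := integrable_deriv_logMellinIntegrand (b := b) ha hs
  rw [cocompact_eq_atBot_atTop]
  exact (tendsto_zero_of_hasDerivAt_of_integrableOn_Iic (a := 0)
    (fun v _ => hasDerivAt_logMellinIntegrand a b s v)
    deriv_integrable.integrableOn integrable.integrableOn).sup
    (tendsto_zero_of_hasDerivAt_of_integrableOn_Ioi (a := 0)
    (fun v _ => hasDerivAt_logMellinIntegrand a b s v)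
    deriv_integrable.integrableOn integrable.integrableOn)

lemma mellin_cexpQuadratic_functional_equation (ha : a.re < 0) (hs : 0 < s.re) :
    s * mellin (cexpQuadratic a b) s + 2 * a * mellin (cexpQuadratic a b) (s + 2) +
      b * mellin (cexpQuadratic a b) (s + 1) = 0 := by
  have integrable := integrable_logMellinIntegrand (b := b) ha hs
  have integrable_two := integrable_logMellinIntegrand (b := b) (s := s + 2) ha
    (by simp; linarith)
  have integrable_one := integrable_logMellinIntegrand (b := b) (s := s + 1) ha
    (by simp; linarith)
  have := integral_eq_zero_of_hasDerivAt_of_integrable (hasDerivAt_logMellinIntegrand a b s)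
    (integrable_deriv_logMellinIntegrand ha hs) integrable
  rw [integral_add ((integrable.const_mul _).fun_add (integrable_two.const_mul _))
    (integrable_one.const_mul _), integral_add (integrable.const_mul _)
    (integrable_two.const_mul _)] at this
  simpa only [integral_const_mul, mellin_cexpQuadratic_eq_integral] using this

lemma abs_im_mul_norm_mellin_cexpQuadratic_le (ha : a.re < 0) (b s : ℂ) :
    |s.im| * ‖mellin (cexpQuadratic a b) s‖ ≤
      2 * ‖a‖ * ‖mellin (cexpQuadratic a b) (s + 2)‖ +
        ‖b‖ * ‖mellin (cexpQuadratic a b) (s + 1)‖ := by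
  rcases le_or_gt s.re 0 with hs | hs
  · rw [mellin_cexpQuadratic_of_re_nonpos hs, norm_zero, mul_zero]
    positivity
  · calc |s.im| * ‖mellin (cexpQuadratic a b) s‖
        ≤ ‖s * mellin (cexpQuadratic a b) s‖ := by
          rw [norm_mul]
          gcongr
          exact Complex.abs_im_le_norm s
      _ = ‖2 * a * mellin (cexpQuadratic a b) (s + 2) +
            b * mellin (cexpQuadratic a b) (s + 1)‖ := by
          rw [← norm_neg]
          congr 1
          linear_combination -mellin_cexpQuadratic_functional_equation (b := b) ha hs
      _ ≤ _ := by
          refine (norm_add_le _ _).trans_eq ?_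
          simp only [norm_mul, Complex.norm_ofNat]

lemma logMellinIntegrand_add_mul_I (a b s z : ℂ) (θ : ℝ) :
    logMellinIntegrand a b s (z + θ * Complex.I) =
      Complex.exp (s * θ * Complex.I) * logMellinIntegrand (a * Complex.exp (2 * θ * Complex.I))
        (b * Complex.exp (θ * Complex.I)) s z := by
  simp only [logMellinIntegrand, ← Complex.exp_add, mul_add, mul_assoc]
  congr 1
  ring_nf

lemma norm_logMellinIntegrand (a b s : ℂ) (v : ℝ) :
    ‖logMellinIntegrand a b s v‖ =
      Real.exp (s.re * v + a.re * Real.exp (2 * v) + b.re * Real.exp v) := by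
  have exp_two_mul : Complex.exp (2 * v) = (Real.exp (2 * v) : ℝ) := by push_cast; rfl
  rw [logMellinIntegrand, Complex.norm_exp, exp_two_mul, ← Complex.ofReal_exp]
  simp only [Complex.add_re, Complex.re_mul_ofReal]

lemma norm_logMellinIntegrand_le {a' b' : ℝ} (ha : a.re ≤ a') (hb : b.re ≤ b') (v : ℝ) :
    ‖logMellinIntegrand a b s v‖ ≤ ‖logMellinIntegrand a' b' s v‖ := by
  simp only [norm_logMellinIntegrand, Complex.ofReal_re]
  gcongr

lemma mellin_cexpQuadratic_eq_rotate {θ : ℝ} (hs : 0 < s.re)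
    (ha : ∀ y ∈ uIcc 0 θ, (a * Complex.exp (2 * y * Complex.I)).re < 0) :
    mellin (cexpQuadratic a b) s = Complex.exp (s * θ * Complex.I) *
      mellin (cexpQuadratic (a * Complex.exp (2 * θ * Complex.I))
        (b * Complex.exp (θ * Complex.I))) s := by
  obtain ⟨y₀, hy₀, hmax⟩ := isCompact_uIcc.exists_isMaxOn (nonempty_uIcc (a := 0) (b := θ))
    (f := fun y : ℝ => (a * Complex.exp (2 * y * Complex.I)).re)
    (Continuous.continuousOn (by fun_prop))
  set α : ℝ := (a * Complex.exp (2 * y₀ * Complex.I)).re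
  have α_neg : (α : ℂ).re < 0 := ha y₀ hy₀
  have norm_le (v y : ℝ) (hy : y ∈ uIcc 0 θ) : ‖logMellinIntegrand a b s (v + y * Complex.I)‖ ≤
      Real.exp (|s.im| * |θ|) * ‖logMellinIntegrand α ‖b‖ s v‖ := by
    rw [logMellinIntegrand_add_mul_I, norm_mul, Complex.norm_exp]
    gcongr
    · have abs_le : |y| ≤ |θ| := by simpa using abs_sub_left_of_mem_uIcc hy
      simpa [abs_mul] using (neg_le_abs (s.im * y)).trans
        ((abs_mul _ _).trans_le (by gcongr))
    · exact norm_logMellinIntegrand_le (hmax hy)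
        ((Complex.re_le_norm _).trans_eq (by simp [Complex.norm_exp])) v
  rw [mellin_cexpQuadratic_eq_integral, mellin_cexpQuadratic_eq_integral,
    ← integral_const_mul]
  simp only [← logMellinIntegrand_add_mul_I]
  refine (integral_add_mul_I_eq_of_norm_le (differentiable_logMellinIntegrand a b s)
    ((integrable_logMellinIntegrand α_neg hs).norm.const_mul _) ?_ norm_le).symm
  simpa using (tendsto_logMellinIntegrand_cocompact α_neg hs).norm.const_mul _

lemma norm_cpow_smul_cexpQuadratic {x : ℝ} (hx : 0 < x) (a b s : ℂ) :
    ‖(x : ℂ) ^ (s - 1) • cexpQuadratic a b x‖ =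
      x ^ (s.re - 1) * Real.exp (a.re * x ^ 2 + b.re * x) := by
  simp [cexpQuadratic, Complex.norm_cpow_eq_rpow_re_of_pos hx, Complex.norm_exp,
    ← Complex.ofReal_pow]

lemma norm_mellin_cexpQuadratic_le (a b s : ℂ) :
    ‖mellin (cexpQuadratic a b) s‖ ≤
      ∫ x in Ioi (0 : ℝ), x ^ (s.re - 1) * Real.exp (a.re * x ^ 2 + b.re * x) := by
  refine (norm_integral_le_integral_norm _).trans_eq
    (setIntegral_congr_fun measurableSet_Ioi fun x hx => norm_cpow_smul_cexpQuadratic hx a b s)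

end ComplexGaussian

section GaussianMoments

lemma integral_sq_gaussianReal (X : ℝ) (v : ℝ≥0) :
    ∫ x, x ^ 2 ∂gaussianReal X v = X ^ 2 + v := by
  have := variance_eq_sub (memLp_id_gaussianReal (μ := X) (v := v) 2)
  simp only [variance_id_gaussianReal, id_eq, integral_id_gaussianReal, Pi.pow_apply] at this
  linarith

lemma integrable_abs_rpow_gaussianReal (X : ℝ) (v : ℝ≥0) {q : ℝ} (hq : 0 ≤ q) :
    Integrable (fun x : ℝ => |x| ^ q) (gaussianReal X v) := by
  lift q to ℝ≥0 using hq
  simpa using (memLp_id_gaussianReal (μ := X) (v := v) q).integrable_norm_rpow'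

lemma integral_abs_rpow_gaussianReal_le (X : ℝ) (v : ℝ≥0) {q : ℝ} (hq : 0 ≤ q) (hq' : q ≤ 2) :
    ∫ x, |x| ^ q ∂gaussianReal X v ≤ (X ^ 2 + v) ^ (q / 2) := by
  have abs_rpow_eq (x : ℝ) : |x| ^ q = (x ^ 2) ^ (q / 2) := by
    rw [← sq_abs, ← Real.rpow_natCast_mul (abs_nonneg x)]
    ring_nf
  have integrable := integrable_abs_rpow_gaussianReal X v hq
  simp only [abs_rpow_eq] at integrable ⊢
  rw [← integral_sq_gaussianReal]
  exact (Real.concaveOn_rpow (by linarith) (by linarith)).le_map_integral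
    (Real.continuous_rpow_const (by linarith)).continuousOn isClosed_Ici
    (.of_forall sq_nonneg) (memLp_id_gaussianReal 2).integrable_sq integrable

lemma integral_Ioi_rpow_mul_exp_neg_sub_sq_div_le {v q : ℝ} (hv : 0 < v) (hq : 0 ≤ q)
    (hq' : q ≤ 2) (X : ℝ) :
    ∫ x in Ioi (0 : ℝ), x ^ q * Real.exp (-(x - X) ^ 2 / (2 * v)) ≤
      √(2 * Real.pi * v) * (X ^ 2 + v) ^ (q / 2) := by
  lift v to ℝ≥0 using hv.le
  have integrand_eq (x : ℝ) : x ^ q * Real.exp (-(x - X) ^ 2 / (2 * v)) =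
      √(2 * Real.pi * v) * (gaussianPDFReal X v x • x ^ q) := by
    rw [gaussianPDFReal, smul_eq_mul]
    field_simp
  simp only [integrand_eq, integral_const_mul]
  gcongr
  calc ∫ x in Ioi (0 : ℝ), gaussianPDFReal X v x • x ^ q
      = ∫ x, (Ioi (0 : ℝ)).indicator (fun x => x ^ q) x ∂gaussianReal X v := by
        rw [integral_gaussianReal_eq_integral_smul (NNReal.coe_pos.1 hv).ne',
          ← integral_indicator measurableSet_Ioi]
        simp only [indicator_smul_apply]
    _ ≤ ∫ x, |x| ^ q ∂gaussianReal X v := by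
        refine integral_mono_of_nonneg
          (.of_forall (indicator_nonneg fun x (hx : 0 < x) => Real.rpow_nonneg hx.le q))
          (integrable_abs_rpow_gaussianReal X v hq)
          (.of_forall (indicator_le' (fun x (hx : 0 < x) => ?_) fun x _ => by positivity))
        rw [abs_of_pos hx]
    _ ≤ (X ^ 2 + v) ^ (q / 2) := integral_abs_rpow_gaussianReal_le X v hq hq'

lemma integrableOn_Ioi_rpow_mul_exp_quadratic {a q : ℝ} (ha : a < 0) (hq : -1 < q) (b : ℝ) :
    IntegrableOn (fun x : ℝ => x ^ q * Real.exp (a * x ^ 2 + b * x)) (Ioi 0) := by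
  have convergent : MellinConvergent (cexpQuadratic a b) (q + 1 : ℝ) :=
    mellinConvergent_cexpQuadratic ha (by rw [Complex.ofReal_re]; linarith)
  refine IntegrableOn.congr_fun convergent.norm (fun x hx => ?_) measurableSet_Ioi
  rw [norm_cpow_smul_cexpQuadratic hx, Complex.ofReal_re, add_sub_cancel_right,
    Complex.ofReal_re, Complex.ofReal_re]

lemma integral_Ioi_rpow_mul_exp_quadratic_le {v q A X : ℝ} (hv : 0 < v) (hq : 0 ≤ q)
    (hq' : q ≤ 2) (hAX : A ≤ X / v) :
    ∫ x in Ioi (0 : ℝ), x ^ q * Real.exp (-(2 * v)⁻¹ * x ^ 2 + A * x) ≤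
      Real.exp (X ^ 2 / (2 * v)) * (√(2 * Real.pi * v) * (X ^ 2 + v) ^ (q / 2)) := by
  have neg_inv_neg : -(2 * v)⁻¹ < 0 := by simpa using hv
  calc ∫ x in Ioi (0 : ℝ), x ^ q * Real.exp (-(2 * v)⁻¹ * x ^ 2 + A * x)
      ≤ ∫ x in Ioi (0 : ℝ), x ^ q * Real.exp (-(2 * v)⁻¹ * x ^ 2 + X / v * x) := by
        refine setIntegral_mono_on
          (integrableOn_Ioi_rpow_mul_exp_quadratic neg_inv_neg (by linarith) _)
          (integrableOn_Ioi_rpow_mul_exp_quadratic neg_inv_neg (by linarith) _)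
          measurableSet_Ioi fun x (hx : 0 < x) => ?_
        gcongr
    _ = Real.exp (X ^ 2 / (2 * v)) *
          ∫ x in Ioi (0 : ℝ), x ^ q * Real.exp (-(x - X) ^ 2 / (2 * v)) := by
        rw [← integral_const_mul]
        refine integral_congr_ae (.of_forall fun x => ?_)
        dsimp only
        rw [mul_left_comm, ← Real.exp_add]
        congr 2
        field_simp
        ring
    _ ≤ _ := by
        gcongr
        exact integral_Ioi_rpow_mul_exp_neg_sub_sq_div_le hv hq hq' X

end GaussianMoments

section TwistedGaussian

/-- The Mellin transform of `t ↦ exp (-t² / 2 + i ℓ t)`, so that `F_δ` is the case `ℓ = 2πδ`. -/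
noncomputable def twistedGaussianMellin (ℓ : ℝ) (s : ℂ) : ℂ :=
  mellin (cexpQuadratic (-1 / 2) (ℓ * Complex.I)) s

lemma Fdelta_eq_twistedGaussianMellin (δ : ℝ) (s : ℂ) :
    Fdelta δ s = twistedGaussianMellin (2 * Real.pi * δ) s := by
  refine congrArg (mellin · s) (funext fun t => ?_)
  rw [e2pi, cexpQuadratic, Complex.ofReal_exp, ← Complex.exp_add]
  push_cast
  ring_nf

lemma norm_twistedGaussianMellin_conj (ℓ : ℝ) (s : ℂ) :
    ‖twistedGaussianMellin ℓ (conj s)‖ = ‖twistedGaussianMellin (-ℓ) s‖ := by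
  refine (norm_mellin_conj _ s).trans (congrArg (‖mellin · s‖) (funext fun t => ?_))
  simp [cexpQuadratic, ← Complex.exp_conj, Complex.conj_ofNat]

lemma abs_im_mul_norm_twistedGaussianMellin_le (ℓ : ℝ) (s : ℂ) :
    |s.im| * ‖twistedGaussianMellin ℓ s‖ ≤
      ‖twistedGaussianMellin ℓ (s + 2)‖ + |ℓ| * ‖twistedGaussianMellin ℓ (s + 1)‖ := by
  simpa [twistedGaussianMellin] using
    abs_im_mul_norm_mellin_cexpQuadratic_le (a := -1 / 2) (by norm_num) (ℓ * Complex.I) s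

variable {ℓ θ X : ℝ} {s : ℂ}

lemma cos_two_mul_pos_of_abs_lt (hθ : |θ| < Real.pi / 4) : 0 < Real.cos (2 * θ) :=
  Real.cos_pos_of_mem_Ioo (abs_lt.1 (by rw [abs_mul, abs_two]; linarith))

lemma re_neg_half_mul_cexp (y : ℝ) :
    (-1 / 2 * Complex.exp (2 * y * Complex.I)).re = -(Real.cos (2 * y) / 2) := by
  have : (-1 / 2 : ℂ) = ((-1 / 2 : ℝ) : ℂ) := by push_cast; rfl
  rw [this, Complex.re_ofReal_mul, ← Complex.ofReal_ofNat 2, ← Complex.ofReal_mul,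
    Complex.exp_ofReal_mul_I_re]
  ring

lemma norm_twistedGaussianMellin_eq_rotate (hθ : |θ| < Real.pi / 4) (hs : 0 < s.re) :
    ‖twistedGaussianMellin ℓ s‖ = Real.exp (-s.im * θ) *
      ‖mellin (cexpQuadratic (-1 / 2 * Complex.exp (2 * θ * Complex.I))
        (ℓ * Complex.I * Complex.exp (θ * Complex.I))) s‖ := by
  rw [twistedGaussianMellin, mellin_cexpQuadratic_eq_rotate (θ := θ) hs, norm_mul,
    Complex.norm_exp]
  · simp
  · intro y hy
    have abs_le : |y| ≤ |θ| := by simpa using abs_sub_left_of_mem_uIcc hy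
    rw [re_neg_half_mul_cexp]
    linarith [cos_two_mul_pos_of_abs_lt (abs_le.trans_lt hθ)]

lemma norm_twistedGaussianMellin_le (hθ : |θ| < Real.pi / 4) (hs : s.re ∈ Icc 1 3)
    (hX : -(ℓ * Real.sin θ) ≤ X * Real.cos (2 * θ)) :
    ‖twistedGaussianMellin ℓ s‖ ≤ Real.exp (-s.im * θ + X ^ 2 * Real.cos (2 * θ) / 2) *
      (√(2 * Real.pi * (Real.cos (2 * θ))⁻¹) *
        (X ^ 2 + (Real.cos (2 * θ))⁻¹) ^ ((s.re - 1) / 2)) := by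
  have cos_pos := cos_two_mul_pos_of_abs_lt hθ
  have linear_re : (ℓ * Complex.I * Complex.exp (θ * Complex.I)).re = -(ℓ * Real.sin θ) := by
    simp [mul_assoc, Complex.exp_ofReal_mul_I_re, Complex.exp_ofReal_mul_I_im]
  rw [norm_twistedGaussianMellin_eq_rotate hθ (by linarith [hs.1]), Real.exp_add,
    mul_assoc (Real.exp _)]
  refine mul_le_mul_of_nonneg_left ?_ (Real.exp_pos _).le
  refine (norm_mellin_cexpQuadratic_le _ _ s).trans ?_
  have quadratic_coeff : -(2 * (Real.cos (2 * θ))⁻¹)⁻¹ = -(Real.cos (2 * θ) / 2) := by field_simp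
  have exponent_eq : X ^ 2 / (2 * (Real.cos (2 * θ))⁻¹) = X ^ 2 * Real.cos (2 * θ) / 2 := by
    field_simp
  rw [re_neg_half_mul_cexp, linear_re, ← quadratic_coeff, ← exponent_eq]
  exact integral_Ioi_rpow_mul_exp_quadratic_le (inv_pos.2 cos_pos) (by linarith [hs.1])
    (by linarith [hs.2]) (by rwa [div_inv_eq_mul])

end TwistedGaussian

section RotationAngle

variable {θ : ℝ}

lemma sin_sq_le_of_abs_le_one (hθ : |θ| ≤ 1) :
    Real.sin θ ^ 2 ≤ θ ^ 2 * (1 - θ ^ 2 / 6 + (θ ^ 2) ^ 2 / 100) ^ 2 := by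
  have sq_le_one : θ ^ 2 ≤ 1 := (sq_le_one_iff_abs_le_one θ).2 hθ
  have abs_sin_le : |Real.sin θ| ≤ |θ| * (1 - θ ^ 2 / 6 + (θ ^ 2) ^ 2 / 100) :=
    calc |Real.sin θ|
        ≤ |θ * (1 - θ ^ 2 / 6)| + |Real.sin θ - (θ - θ ^ 3 / 6)| := by
          refine (abs_add_le _ _).trans_eq' (congrArg _ ?_)
          ring
      _ ≤ |θ * (1 - θ ^ 2 / 6)| + |θ| ^ 5 / 100 := by
          gcongr
          exact Real.sin_bound hθ
      _ = |θ| * (1 - θ ^ 2 / 6 + (θ ^ 2) ^ 2 / 100) := by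
          rw [abs_mul, abs_of_nonneg (by linarith : 0 ≤ 1 - θ ^ 2 / 6), ← sq_abs θ]
          ring
  simpa only [sq_abs, mul_pow] using pow_le_pow_left₀ (abs_nonneg _) abs_sin_le 2

lemma abs_lt_pi_div_four (hθ : |θ| ≤ 0.282) : |θ| < Real.pi / 4 :=
  hθ.trans_lt (by linarith [Real.pi_gt_three])

lemma inv_cos_two_mul_le (hθ : |θ| ≤ 0.282) :
    (Real.cos (2 * θ))⁻¹ ≤ 1 + 2.3048 * θ ^ 2 := by
  have cos_eq : Real.cos (2 * θ) = 1 - 2 * Real.sin θ ^ 2 := by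
    rw [Real.cos_two_mul, Real.cos_sq']
    ring
  have cos_pos := cos_two_mul_pos_of_abs_lt (abs_lt_pi_div_four hθ)
  have sin_sq_le := sin_sq_le_of_abs_le_one (hθ.trans (by norm_num))
  have sq_le : θ ^ 2 ≤ 0.079524 := by nlinarith [sq_abs θ, abs_nonneg θ]
  have polynomial_le {w : ℝ} (hw : 0 ≤ w) (hw' : w ≤ 0.079524) :
      (1 - w / 6 + w ^ 2 / 100) ^ 2 * (2 + 4.6096 * w) ≤ 2.3048 := by
    have factor_le : 1 - w / 6 + w ^ 2 / 100 ≤ 1 - 0.16586 * w := by nlinarith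
    have factor_nonneg : 0 ≤ 1 - w / 6 + w ^ 2 / 100 := by nlinarith
    have factor_sq_le := pow_le_pow_left₀ factor_nonneg factor_le 2
    nlinarith [mul_nonneg hw (sub_nonneg.2 hw'), mul_nonneg (sq_nonneg w) (sub_nonneg.2 hw')]
  rw [inv_le_iff_one_le_mul₀ cos_pos, cos_eq]
  nlinarith [mul_le_mul_of_nonneg_left (polynomial_le (sq_nonneg θ) sq_le) (sq_nonneg θ)]

lemma inv_cos_two_mul_le_of_abs_le (hθ : |θ| ≤ 0.282) : (Real.cos (2 * θ))⁻¹ ≤ 1.1833 := by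
  nlinarith [inv_cos_two_mul_le hθ, sq_abs θ, abs_nonneg θ]

lemma sqrt_two_pi_mul_inv_cos_two_mul_le (hθ : |θ| ≤ 0.282) :
    √(2 * Real.pi * (Real.cos (2 * θ))⁻¹) ≤ 2.73 := by
  have cos_pos := cos_two_mul_pos_of_abs_lt (abs_lt_pi_div_four hθ)
  rw [Real.sqrt_le_left (by norm_num)]
  calc 2 * Real.pi * (Real.cos (2 * θ))⁻¹ ≤ 2 * 3.1416 * 1.1833 := by
        gcongr
        · exact Real.pi_lt_d4.le
        · exact inv_cos_two_mul_le_of_abs_le hθ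
    _ ≤ 2.73 ^ 2 := by norm_num

end RotationAngle

section Bounds

variable {ℓ θ X R T : ℝ} {s s₁ s₂ : ℂ} {k : ℕ}

lemma norm_twistedGaussianMellin_le_rpow (hθ : |θ| ≤ 0.282) (hs : s.re ∈ Icc 1 3)
    (hX : -(ℓ * Real.sin θ) ≤ X * Real.cos (2 * θ)) (hR : 0 ≤ R)
    (hXR : X ^ 2 + (Real.cos (2 * θ))⁻¹ ≤ R ^ 2) :
    ‖twistedGaussianMellin ℓ s‖ ≤
      2.73 * R ^ (s.re - 1) * Real.exp (-s.im * θ + X ^ 2 * Real.cos (2 * θ) / 2) := by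
  have hθ' := abs_lt_pi_div_four hθ
  have base_nonneg : 0 ≤ X ^ 2 + (Real.cos (2 * θ))⁻¹ := by
    have := cos_two_mul_pos_of_abs_lt hθ'
    positivity
  refine (norm_twistedGaussianMellin_le hθ' hs hX).trans ?_
  rw [mul_comm (Real.exp _)]
  gcongr
  · exact sqrt_two_pi_mul_inv_cos_two_mul_le hθ
  · calc (X ^ 2 + (Real.cos (2 * θ))⁻¹) ^ ((s.re - 1) / 2) ≤ (R ^ 2) ^ ((s.re - 1) / 2) := by
          have := hs.1
          gcongr
      _ = R ^ (s.re - 1) := by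
          rw [← Real.rpow_natCast_mul hR]
          congr 1
          push_cast
          ring

lemma norm_twistedGaussianMellin_le_pow {n : ℕ} (hθ : |θ| ≤ 0.282) (hs : s.re ∈ Icc 1 3)
    (hsn : s.re ≤ n + 1) (hX : -(ℓ * Real.sin θ) ≤ X * Real.cos (2 * θ)) (hR : 1 ≤ R)
    (hXR : X ^ 2 + (Real.cos (2 * θ))⁻¹ ≤ R ^ 2) :
    ‖twistedGaussianMellin ℓ s‖ ≤
      2.73 * R ^ n * Real.exp (-s.im * θ + X ^ 2 * Real.cos (2 * θ) / 2) := by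
  refine (norm_twistedGaussianMellin_le_rpow hθ hs hX (by linarith) hXR).trans ?_
  rw [← Real.rpow_natCast R n]
  gcongr
  linarith

lemma norm_twistedGaussianMellin_le_of_re_mem_Icc_zero_one (hθ : |θ| ≤ 0.282)
    (hs : s.re ∈ Icc 0 1) (hs_im : 0 < s.im) (hX : -(ℓ * Real.sin θ) ≤ X * Real.cos (2 * θ))
    (hR : 1 ≤ R) (hXR : X ^ 2 + (Real.cos (2 * θ))⁻¹ ≤ R ^ 2)
    (hRs : R * (R + |ℓ|) ≤ 1.375 * s.im) :
    ‖twistedGaussianMellin ℓ s‖ ≤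
      3.755 * Real.exp (-s.im * θ + X ^ 2 * Real.cos (2 * θ) / 2) := by
  obtain ⟨re_nonneg, re_le_one⟩ := hs
  have re_add_two : (s + 2).re = s.re + 2 := by simp
  have re_add_one : (s + 1).re = s.re + 1 := by simp
  have add_two_le := norm_twistedGaussianMellin_le_pow (s := s + 2) (n := 2) hθ
    (re_add_two ▸ ⟨by linarith, by linarith⟩) (by push_cast; linarith) hX hR hXR
  have add_one_le := norm_twistedGaussianMellin_le_pow (s := s + 1) (n := 1) hθ
    (re_add_one ▸ ⟨by linarith, by linarith⟩) (by push_cast; linarith) hX hR hXR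
  simp only [Complex.add_im, Complex.im_ofNat, Complex.one_im, add_zero, pow_one]
    at add_two_le add_one_le
  set E := Real.exp (-s.im * θ + X ^ 2 * Real.cos (2 * θ) / 2)
  refine le_of_mul_le_mul_left ?_ hs_im
  calc s.im * ‖twistedGaussianMellin ℓ s‖
      ≤ ‖twistedGaussianMellin ℓ (s + 2)‖ + |ℓ| * ‖twistedGaussianMellin ℓ (s + 1)‖ := by
        simpa only [abs_of_pos hs_im] using abs_im_mul_norm_twistedGaussianMellin_le ℓ s
    _ ≤ 2.73 * R ^ 2 * E + |ℓ| * (2.73 * R * E) := by gcongr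
    _ = 2.73 * (R * (R + |ℓ|)) * E := by ring
    _ ≤ 2.73 * (1.375 * s.im) * E := by gcongr
    _ ≤ s.im * (3.755 * E) := by
        have : 0 < s.im * E := by positivity
        linarith

lemma norm_twistedGaussianMellin_le_ckconst (hk : k ≤ 2) (hθ : |θ| ≤ 0.282)
    (hs : s.re ∈ Icc (k : ℝ) (k + 1)) (hs_im : 0 < s.im)
    (hX : -(ℓ * Real.sin θ) ≤ X * Real.cos (2 * θ)) (hR : 1 ≤ R)
    (hXR : X ^ 2 + (Real.cos (2 * θ))⁻¹ ≤ R ^ 2) (hRs : R * (R + |ℓ|) ≤ 1.375 * s.im) :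
    ‖twistedGaussianMellin ℓ s‖ ≤
      0.94 * ckconst k * R ^ k * Real.exp (-s.im * θ + X ^ 2 * Real.cos (2 * θ) / 2) := by
  rcases k.eq_zero_or_pos with rfl | hk_pos
  · refine (norm_twistedGaussianMellin_le_of_re_mem_Icc_zero_one hθ (by simpa using hs) hs_im hX
      hR hXR hRs).trans ?_
    gcongr
    norm_num [ckconst]
  · have one_le_k : (1 : ℝ) ≤ k := by exact_mod_cast hk_pos
    have k_le_two : (k : ℝ) ≤ 2 := by exact_mod_cast hk
    refine (norm_twistedGaussianMellin_le_pow hθ ⟨one_le_k.trans hs.1, by linarith [hs.2]⟩ hs.2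
      hX hR hXR).trans ?_
    gcongr
    interval_cases k <;> norm_num [ckconst]

lemma ckconst_pos (k : ℕ) : 0 < ckconst k := by
  unfold ckconst
  split_ifs <;> norm_num

lemma sin_sq_mul_inv_cos_two_mul_le (hθ : |θ| ≤ 0.282) :
    Real.sin θ ^ 2 * (Real.cos (2 * θ))⁻¹ ≤ 1.1524 * θ ^ 2 := by
  have cos_pos := cos_two_mul_pos_of_abs_lt (abs_lt_pi_div_four hθ)
  have sin_sq_eq : Real.sin θ ^ 2 = (1 - Real.cos (2 * θ)) / 2 := by
    rw [Real.sin_sq_eq_half_sub]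
    ring
  rw [sin_sq_eq, div_mul_eq_mul_div, sub_mul, mul_inv_cancel₀ cos_pos.ne']
  linarith [inv_cos_two_mul_le hθ]

lemma norm_twistedGaussianMellin_neg_le (hk : k ≤ 2) (hθ : |θ| ≤ 0.282)
    (hs : s.re ∈ Icc (k : ℝ) (k + 1)) (hs_im : 0 < s.im) (hR : 1 ≤ R)
    (hθR : 1.37 * (ℓ * θ) ^ 2 + 1.1833 ≤ R ^ 2) (hRs : R * (R + |ℓ|) ≤ 1.375 * s.im) :
    ‖twistedGaussianMellin (-ℓ) s‖ ≤
      0.94 * ckconst k * R ^ k * Real.exp (-s.im * θ + 0.5762 * (ℓ * θ) ^ 2) := by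
  have cos_pos := cos_two_mul_pos_of_abs_lt (abs_lt_pi_div_four hθ)
  have ratio_le := mul_le_mul_of_nonneg_left (sin_sq_mul_inv_cos_two_mul_le hθ)
    (sq_nonneg ℓ)
  have inv_le := inv_cos_two_mul_le_of_abs_le hθ
  set X := ℓ * Real.sin θ * (Real.cos (2 * θ))⁻¹
  have X_mul_cos : X * Real.cos (2 * θ) = ℓ * Real.sin θ := inv_mul_cancel_right₀ cos_pos.ne' _
  have X_sq_mul_cos_le : X ^ 2 * Real.cos (2 * θ) ≤ 1.1524 * (ℓ * θ) ^ 2 := by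
    rw [pow_two, mul_assoc, X_mul_cos]
    linarith
  have X_sq_le : X ^ 2 ≤ 1.37 * (ℓ * θ) ^ 2 :=
    calc X ^ 2 = X ^ 2 * Real.cos (2 * θ) * (Real.cos (2 * θ))⁻¹ :=
          (mul_inv_cancel_right₀ cos_pos.ne' _).symm
      _ ≤ 1.1524 * (ℓ * θ) ^ 2 * 1.1833 := by gcongr
      _ ≤ 1.37 * (ℓ * θ) ^ 2 := by linarith [sq_nonneg (ℓ * θ)]
  refine (norm_twistedGaussianMellin_le_ckconst (X := X) hk hθ hs hs_im ?_ hR (by linarith)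
    (by rwa [abs_neg])).trans ?_
  · linarith
  · have c_pos := ckconst_pos k
    gcongr
    linarith

lemma norm_twistedGaussianMellin_le_of_nonneg (hk : k ≤ 2) (hℓ : 0 ≤ ℓ)
    (hs : s.re ∈ Icc (k : ℝ) (k + 1)) (hs_im : 100 ≤ s.im) (hR : 1 ≤ R)
    (hR_sq : 1.1833 ≤ R ^ 2) (hRs : R * (R + ℓ) ≤ 1.375 * s.im) :
    ‖twistedGaussianMellin ℓ s‖ ≤ 0.06 * ckconst k * R ^ k * Real.exp (-0.16 * s.im) := by
  have hθ : |(0.282 : ℝ)| ≤ 0.282 := by norm_num [abs_of_pos]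
  have sin_nonneg : 0 ≤ Real.sin 0.282 :=
    Real.sin_nonneg_of_nonneg_of_le_pi (by norm_num) (by linarith [Real.pi_gt_three])
  have exp_neg_le : Real.exp (-(0.122 * s.im)) ≤ 0.06 := by
    rw [Real.exp_neg, inv_le_comm₀ (Real.exp_pos _) (by norm_num)]
    nlinarith [Real.quadratic_le_exp_of_nonneg (by linarith : 0 ≤ 0.122 * s.im)]
  have c_pos := ckconst_pos k
  calc ‖twistedGaussianMellin ℓ s‖
      ≤ 0.94 * ckconst k * R ^ k *
          Real.exp (-s.im * 0.282 + 0 ^ 2 * Real.cos (2 * 0.282) / 2) :=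
        norm_twistedGaussianMellin_le_ckconst hk hθ hs (by linarith)
          (by linarith [mul_nonneg hℓ sin_nonneg]) hR
          (by linarith [inv_cos_two_mul_le_of_abs_le hθ]) (by rwa [abs_of_nonneg hℓ])
    _ = 0.94 * ckconst k * R ^ k * (Real.exp (-(0.122 * s.im)) * Real.exp (-0.16 * s.im)) := by
        rw [← Real.exp_add]
        ring_nf
    _ ≤ 1 * ckconst k * R ^ k * (0.06 * Real.exp (-0.16 * s.im)) := by
        gcongr
        norm_num
    _ = 0.06 * ckconst k * R ^ k * Real.exp (-0.16 * s.im) := by ring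

lemma norm_add_norm_twistedGaussianMellin_le {g : ℝ} (hk : k ≤ 2) (hℓ : 0 ≤ ℓ)
    (hT : 100 ≤ T) (hs₁ : s₁ ∈ Icc (k : ℝ) (k + 1) ×ℂ {T})
    (hs₂ : s₂ ∈ Icc (k : ℝ) (k + 1) ×ℂ {T}) (hθ : |θ| ≤ 0.282) (hR : 1 ≤ R)
    (hθR : 1.37 * (ℓ * θ) ^ 2 + 1.1833 ≤ R ^ 2) (hRT : R * (R + ℓ) ≤ 1.375 * T)
    (hg : -T * θ + 0.5762 * (ℓ * θ) ^ 2 ≤ g) (hg' : -0.16 * T ≤ g) :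
    ‖twistedGaussianMellin ℓ s₁‖ + ‖twistedGaussianMellin (-ℓ) s₂‖ ≤
      ckconst k * R ^ k * Real.exp g := by
  have c_pos := ckconst_pos k
  obtain ⟨hs₁_re, hs₁_im : s₁.im = T⟩ := hs₁
  obtain ⟨hs₂_re, hs₂_im : s₂.im = T⟩ := hs₂
  calc ‖twistedGaussianMellin ℓ s₁‖ + ‖twistedGaussianMellin (-ℓ) s₂‖
      ≤ 0.06 * ckconst k * R ^ k * Real.exp (-0.16 * T) +
          0.94 * ckconst k * R ^ k * Real.exp (-T * θ + 0.5762 * (ℓ * θ) ^ 2) := by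
        gcongr
        · exact hs₁_im ▸ norm_twistedGaussianMellin_le_of_nonneg hk hℓ hs₁_re (by rwa [hs₁_im]) hR
            (by linarith [sq_nonneg (ℓ * θ)]) (by rwa [hs₁_im])
        · exact hs₂_im ▸ norm_twistedGaussianMellin_neg_le hk hθ hs₂_re (by linarith) hR hθR
            (by rwa [abs_of_nonneg hℓ, hs₂_im])
    _ ≤ 0.06 * ckconst k * R ^ k * Real.exp g + 0.94 * ckconst k * R ^ k * Real.exp g := by
        gcongr
    _ = ckconst k * R ^ k * Real.exp g := by ring

lemma norm_add_norm_twistedGaussianMellin_le_of_lt (hk : k ≤ 2) (hℓ : 0 ≤ ℓ)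
    (hT : 100 ≤ T) (hs₁ : s₁ ∈ Icc (k : ℝ) (k + 1) ×ℂ {T})
    (hs₂ : s₂ ∈ Icc (k : ℝ) (k + 1) ×ℂ {T}) (hℓT : 5 / 2 * ℓ ≤ T)
    (hTℓ : T < 3 / 8 * ℓ ^ 2) :
    ‖twistedGaussianMellin ℓ s₁‖ + ‖twistedGaussianMellin (-ℓ) s₂‖ ≤
      ckconst k * (T / ℓ) ^ k * Real.exp (-0.426 * (T / ℓ) ^ 2) := by
  have ℓ_pos : 0 < ℓ := hℓ.lt_of_ne' fun h => by norm_num [h] at hTℓ; linarith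
  set y := T / ℓ with y_def
  have T_eq : T = ℓ * y := by rw [y_def]; field_simp
  have y_ge : 5 / 2 ≤ y := (le_div_iff₀ ℓ_pos).2 hℓT
  have y_le : y ≤ 3 / 8 * ℓ := (div_le_iff₀ ℓ_pos).2 (by nlinarith)
  have y_sq_le : y ^ 2 ≤ 3 / 8 * T := by rw [T_eq]; nlinarith
  have angle_eq : ℓ * (0.752 * y / ℓ) = 0.752 * y := by field_simp
  have T_mul_angle : T * (0.752 * y / ℓ) = 0.752 * y ^ 2 := by rw [T_eq]; field_simp
  refine norm_add_norm_twistedGaussianMellin_le (θ := 0.752 * y / ℓ) hk hℓ hT hs₁ hs₂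
    ?_ (by linarith) ?_ ?_ ?_ (by linarith)
  · rw [abs_of_pos (by positivity), div_le_iff₀ ℓ_pos]
    linarith
  · rw [angle_eq]
    nlinarith
  · linarith
  · rw [angle_eq, neg_mul, T_mul_angle]
    linarith [sq_nonneg y]

lemma norm_add_norm_twistedGaussianMellin_le_of_le (hk : k ≤ 2) (hℓ : 0 ≤ ℓ)
    (hT : 100 ≤ T) (hs₁ : s₁ ∈ Icc (k : ℝ) (k + 1) ×ℂ {T})
    (hs₂ : s₂ ∈ Icc (k : ℝ) (k + 1) ×ℂ {T}) (hℓT : 3 / 8 * ℓ ^ 2 ≤ T) :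
    ‖twistedGaussianMellin ℓ s₁‖ + ‖twistedGaussianMellin (-ℓ) s₂‖ ≤
      ckconst k * T ^ ((k : ℝ) / 2) * Real.exp (-0.1598 * T) := by
  have T_pos : 0 < T := by linarith
  set r := √T
  have r_sq : r ^ 2 = T := Real.sq_sqrt T_pos.le
  have r_ge : 10 ≤ r := Real.le_sqrt_of_sq_le (by linarith)
  have ℓ_le : ℓ ≤ 1.633 * r := (sq_le_sq₀ hℓ (by linarith)).1 (by nlinarith)
  have rpow_eq : T ^ ((k : ℝ) / 2) = r ^ k := by
    rw [← r_sq, ← Real.rpow_natCast_mul (by linarith), ← Real.rpow_natCast r k]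
    congr 1
    push_cast
    ring
  have c_pos := ckconst_pos k
  calc ‖twistedGaussianMellin ℓ s₁‖ + ‖twistedGaussianMellin (-ℓ) s₂‖
      ≤ ckconst k * (0.6 * r) ^ k * Real.exp (-0.1598 * T) :=
        norm_add_norm_twistedGaussianMellin_le (θ := 0.282) hk hℓ hT hs₁ hs₂
          (by norm_num [abs_of_pos]) (by linarith) (by nlinarith) (by nlinarith) (by nlinarith)
          (by linarith)
    _ ≤ ckconst k * T ^ ((k : ℝ) / 2) * Real.exp (-0.1598 * T) := by
        rw [rpow_eq]
        gcongr
        linarith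

lemma exists_norm_add_norm_twistedGaussianMellin_eq {S : Set ℝ} {z w : ℂ} (hz : z.re ∈ S)
    (hw : w.re ∈ S) (hzw : w.im = -z.im) (ℓ : ℝ) :
    ∃ s₁ ∈ S ×ℂ {|z.im|}, ∃ s₂ ∈ S ×ℂ {|z.im|},
      ‖twistedGaussianMellin ℓ z‖ + ‖twistedGaussianMellin ℓ w‖ =
        ‖twistedGaussianMellin |ℓ| s₁‖ + ‖twistedGaussianMellin (-|ℓ|) s₂‖ := by
  wlog hz_im : 0 ≤ z.im generalizing z w
  · simpa only [hzw, abs_neg, add_comm] using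
      this hw hz (by rw [hzw, neg_neg]) (by linarith : 0 ≤ w.im)
  have z_mem : z ∈ S ×ℂ {|z.im|} := ⟨hz, (abs_of_nonneg hz_im).symm⟩
  have w_conj_mem : conj w ∈ S ×ℂ {|z.im|} := by
    simpa [Complex.mem_reProdIm, hzw, abs_of_nonneg hz_im] using hw
  have norm_w : ‖twistedGaussianMellin ℓ w‖ = ‖twistedGaussianMellin (-ℓ) (conj w)‖ := by
    rw [← norm_twistedGaussianMellin_conj, Complex.conj_conj]
  rcases le_total 0 ℓ with hℓ | hℓ
  · exact ⟨z, z_mem, conj w, w_conj_mem, by rw [norm_w, abs_of_nonneg hℓ]⟩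
  · exact ⟨conj w, w_conj_mem, z, z_mem, by rw [norm_w, abs_of_nonpos hℓ, neg_neg, add_comm]⟩

lemma exists_norm_add_norm_Fdelta_eq (δ τ : ℝ) {σ : ℝ} (hσ : σ ∈ Icc 0 1) (k : ℕ) :
    ∃ s₁ ∈ Icc (k : ℝ) (k + 1) ×ℂ {|τ|}, ∃ s₂ ∈ Icc (k : ℝ) (k + 1) ×ℂ {|τ|},
      ‖Fdelta δ (σ + τ * Complex.I + k)‖ + ‖Fdelta δ (k + 1 - (σ + τ * Complex.I))‖ =
        ‖twistedGaussianMellin (2 * Real.pi * |δ|) s₁‖ +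
          ‖twistedGaussianMellin (-(2 * Real.pi * |δ|)) s₂‖ := by
  have ℓ_eq : |2 * Real.pi * δ| = 2 * Real.pi * |δ| := by
    rw [abs_mul, abs_of_pos Real.two_pi_pos]
  have im_eq : (σ + τ * Complex.I + k : ℂ).im = τ := by simp
  have re_eq : (σ + τ * Complex.I + k : ℂ).re = σ + k := by simp
  have re_eq' : (k + 1 - (σ + τ * Complex.I) : ℂ).re = k + 1 - σ := by simp
  simpa only [Fdelta_eq_twistedGaussianMellin, im_eq, ℓ_eq] using
    exists_norm_add_norm_twistedGaussianMellin_eq (S := Icc (k : ℝ) (k + 1))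
      (z := σ + τ * Complex.I + k) (w := k + 1 - (σ + τ * Complex.I))
      (re_eq ▸ ⟨by linarith [hσ.1], by linarith [hσ.2]⟩)
      (re_eq' ▸ ⟨by linarith [hσ.2], by linarith [hσ.1]⟩) (by simp) (2 * Real.pi * δ)

end Bounds

/-- **Corollary 3.2**: simplified bounds for the Mellin transform of the twisted Gaussian. -/
theorem mellin_twisted_gaussian_simplified_bound
    (δ σ τ : ℝ) (hσ : σ ∈ Set.Icc (0:ℝ) 1) (hτ : max 100 (4 * Real.pi^2 * |δ|) ≤ |τ|)
    (k : ℕ) (hk : k ≤ 2) :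
    (|τ| < (3/2) * (Real.pi * δ)^2 →
      ‖Fdelta δ (((σ : ℂ) + τ * Complex.I) + k)‖
          + ‖Fdelta δ ((k : ℂ) + 1 - ((σ : ℂ) + τ * Complex.I))‖
        ≤ ckconst k * (|τ| / (2 * Real.pi * |δ|)) ^ k
            * Real.exp (-0.1065 * (τ / (Real.pi * δ))^2)) ∧
    ((3/2) * (Real.pi * δ)^2 ≤ |τ| →
      ‖Fdelta δ (((σ : ℂ) + τ * Complex.I) + k)‖
          + ‖Fdelta δ ((k : ℂ) + 1 - ((σ : ℂ) + τ * Complex.I))‖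
        ≤ ckconst k * |τ| ^ ((k : ℝ) / 2) * Real.exp (-0.1598 * |τ|)) := by
  obtain ⟨τ_ge, δ_le⟩ := max_le_iff.1 hτ
  obtain ⟨s₁, hs₁, s₂, hs₂, sum_eq⟩ := exists_norm_add_norm_Fdelta_eq δ τ hσ k
  have ℓ_nonneg : 0 ≤ 2 * Real.pi * |δ| := by positivity
  have threshold_eq : 3 / 2 * (Real.pi * δ) ^ 2 = 3 / 8 * (2 * Real.pi * |δ|) ^ 2 := by
    rw [mul_pow, mul_pow, sq_abs]
    ring
  have exponent_eq : -0.1065 * (τ / (Real.pi * δ)) ^ 2 =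
      -0.426 * (|τ| / (2 * Real.pi * |δ|)) ^ 2 := by
    rw [div_pow, div_pow, mul_pow, mul_pow, sq_abs, sq_abs]
    ring
  have ℓ_le : 5 / 2 * (2 * Real.pi * |δ|) ≤ |τ| := by
    nlinarith [Real.pi_gt_three, mul_nonneg Real.pi_pos.le (abs_nonneg δ)]
  rw [sum_eq, threshold_eq, exponent_eq]
  exact ⟨norm_add_norm_twistedGaussianMellin_le_of_lt hk ℓ_nonneg τ_ge hs₁ hs₂ ℓ_le,
    norm_add_norm_twistedGaussianMellin_le_of_le hk ℓ_nonneg τ_ge hs₁ hs₂⟩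
end

section
/- For ρ > 0 let j(ρ) = √(1+ρ²), υ(ρ) = √((1+j(ρ))/2), and E(ρ) = ½(arccos(1/υ(ρ)) − 2(υ(ρ)−1)/ρ). Then E(ρ) ≥ ρ/8 − 5ρ³/384 for all ρ > 0. Moreover, E(ρ) = π/4 − β/2 − sin(2β)/(4(1 + sin β)), where β = arcsin(1/υ(ρ)). -/
open Real

/-- `j(ρ) = √(1+ρ²)`. -/
noncomputable def jfun (ρ : ℝ) : ℝ := Real.sqrt (1 + ρ^2)

/-- `υ(ρ) = √((1+j(ρ))/2)`. -/
noncomputable def upsfun (ρ : ℝ) : ℝ := Real.sqrt ((1 + jfun ρ) / 2)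

/-- `E(ρ) = ½(arccos(1/υ(ρ)) − 2(υ(ρ)−1)/ρ)`. -/
noncomputable def Efun (ρ : ℝ) : ℝ :=
  (Real.arccos (1 / upsfun ρ) - 2 * (upsfun ρ - 1) / ρ) / 2

/-!
Everything rests on the algebraic relation `4υ²(υ² - 1) = ρ²`. It gives `√(1 - 1/υ²) = ρ/(2υ²)`,
from which the closed form follows, and it makes the derivative of `arccos (1/υ)` equal to `2υ'/ρ`.
The terms in `υ'` then cancel in the derivative of `E`, leaving `E'(ρ) = (υ - 1)/ρ²`. The lower
bound is the integral of `υ ≥ 1 + ρ²/8 - 5ρ⁴/128`, starting from `E(0) = 0`.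
-/

theorem jfun_sq (ρ : ℝ) : jfun ρ ^ 2 = 1 + ρ ^ 2 :=
  sq_sqrt (by positivity)

theorem one_le_jfun (ρ : ℝ) : 1 ≤ jfun ρ :=
  one_le_sqrt.2 (le_add_of_nonneg_right (sq_nonneg ρ))

theorem upsfun_sq (ρ : ℝ) : upsfun ρ ^ 2 = (1 + jfun ρ) / 2 :=
  sq_sqrt (by linarith [one_le_jfun ρ])

theorem one_le_upsfun (ρ : ℝ) : 1 ≤ upsfun ρ :=
  one_le_sqrt.2 (by linarith [one_le_jfun ρ])

theorem upsfun_pos (ρ : ℝ) : 0 < upsfun ρ :=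
  one_pos.trans_le (one_le_upsfun ρ)

theorem upsfun_zero : upsfun 0 = 1 := by
  norm_num [upsfun, jfun]

theorem four_mul_upsfun_sq_mul_sub_one (ρ : ℝ) :
    4 * upsfun ρ ^ 2 * (upsfun ρ ^ 2 - 1) = ρ ^ 2 := by
  rw [upsfun_sq]
  linear_combination jfun_sq ρ

theorem one_lt_upsfun {ρ : ℝ} (hρ : ρ ≠ 0) : 1 < upsfun ρ := by
  refine (one_le_upsfun ρ).lt_of_ne fun h => hρ ?_
  simpa [← h] using (four_mul_upsfun_sq_mul_sub_one ρ).symm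

theorem quartic_le_upsfun (ρ : ℝ) : 1 + ρ ^ 2 / 8 - 5 * ρ ^ 4 / 128 ≤ upsfun ρ := by
  have hu := one_le_upsfun ρ
  have hrel := four_mul_upsfun_sq_mul_sub_one ρ
  generalize upsfun ρ = u at hu hrel ⊢
  have hgap : u - (1 + ρ ^ 2 / 8 - 5 * ρ ^ 4 / 128) =
      (u - 1) ^ 2 * (5 * (u ^ 2 * (u + 1)) ^ 2 - 4 * (u ^ 2 + 2 * u + 2)) / 8 := by
    rw [show ρ ^ 4 = (ρ ^ 2) ^ 2 by ring, ← hrel]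
    ring
  have hfactor : 4 * (u ^ 2 + 2 * u + 2) ≤ 5 * (u ^ 2 * (u + 1)) ^ 2 :=
    calc 4 * (u ^ 2 + 2 * u + 2) ≤ 5 * (u * (1 + 1)) ^ 2 := by nlinarith
      _ ≤ 5 * (u ^ 2 * (u + 1)) ^ 2 := by
        gcongr
        exact le_self_pow₀ hu two_ne_zero
  rw [← sub_nonneg, hgap]
  exact div_nonneg (mul_nonneg (sq_nonneg _) (sub_nonneg.2 hfactor)) (by norm_num)

theorem sqrt_one_sub_one_div_upsfun_sq {ρ : ℝ} (hρ : 0 ≤ ρ) :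
    √(1 - (1 / upsfun ρ) ^ 2) = ρ / (2 * upsfun ρ ^ 2) := by
  have hu := upsfun_pos ρ
  have hsq : 1 - (1 / upsfun ρ) ^ 2 = (ρ / (2 * upsfun ρ ^ 2)) ^ 2 := by
    field_simp
    linear_combination four_mul_upsfun_sq_mul_sub_one ρ
  rw [hsq, sqrt_sq (by positivity)]

-- At `ρ = 0` the left side is the junk value `x / 0 = 0`, while the right side is continuous.
theorem two_mul_upsfun_sub_one_div (ρ : ℝ) :
    2 * (upsfun ρ - 1) / ρ = ρ / (2 * upsfun ρ ^ 2 * (upsfun ρ + 1)) := by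
  rcases eq_or_ne ρ 0 with rfl | hρ
  · simp
  · have hu := upsfun_pos ρ
    field_simp
    linear_combination four_mul_upsfun_sq_mul_sub_one ρ

theorem differentiable_upsfun : Differentiable ℝ upsfun := fun ρ => by
  have hj : DifferentiableAt ℝ jfun ρ :=
    DifferentiableAt.sqrt (by fun_prop) (by positivity)
  exact ((hj.const_add 1).div_const 2).sqrt (by linarith [one_le_jfun ρ])

theorem Efun_zero : Efun 0 = 0 := by
  simp [Efun, upsfun_zero]

theorem continuous_Efun : Continuous Efun := by
  have hu : Continuous upsfun := differentiable_upsfun.continuous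
  have harccos : Continuous fun ρ => arccos (1 / upsfun ρ) :=
    continuous_arccos.comp (continuous_const.div hu fun ρ => (upsfun_pos ρ).ne')
  have hquot : Continuous fun ρ => 2 * (upsfun ρ - 1) / ρ := by
    simp only [two_mul_upsfun_sub_one_div]
    refine continuous_id.div (by fun_prop) fun ρ => ?_
    have := upsfun_pos ρ
    positivity
  exact (harccos.sub hquot).div_const 2

theorem hasDerivAt_arccos_one_div_upsfun {ρ : ℝ} (hρ : 0 < ρ) :
    HasDerivAt (fun x => arccos (1 / upsfun x)) (2 * deriv upsfun ρ / ρ) ρ := by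
  have hu := upsfun_pos ρ
  have hlt : 1 / upsfun ρ < 1 := (div_lt_one hu).2 (one_lt_upsfun hρ.ne')
  have hneg : -1 < 1 / upsfun ρ := neg_one_lt_zero.trans (one_div_pos.2 hu)
  have hinv : HasDerivAt (fun x => 1 / upsfun x) (-deriv upsfun ρ / upsfun ρ ^ 2) ρ := by
    simpa only [one_div] using (differentiable_upsfun ρ).hasDerivAt.fun_inv hu.ne'
  refine ((hasDerivAt_arccos hneg.ne' hlt.ne).comp ρ hinv).congr_deriv ?_
  rw [sqrt_one_sub_one_div_upsfun_sq hρ.le]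
  field_simp

theorem hasDerivAt_Efun {ρ : ℝ} (hρ : 0 < ρ) :
    HasDerivAt Efun ((upsfun ρ - 1) / ρ ^ 2) ρ := by
  have hquot : HasDerivAt (fun x => 2 * (upsfun x - 1) / x)
      (2 * deriv upsfun ρ / ρ - 2 * (upsfun ρ - 1) / ρ ^ 2) ρ := by
    refine ((((differentiable_upsfun ρ).hasDerivAt.sub_const 1).const_mul 2).fun_div
      (hasDerivAt_id' ρ) hρ.ne').congr_deriv ?_
    field_simp
  refine (((hasDerivAt_arccos_one_div_upsfun hρ).fun_sub hquot).div_const 2).congr_deriv ?_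
  ring

theorem cubic_le_Efun {ρ : ℝ} (hρ : 0 ≤ ρ) : ρ / 8 - 5 * ρ ^ 3 / 384 ≤ Efun ρ := by
  have hcubic (x : ℝ) :
      HasDerivAt (fun x : ℝ => x / 8 - 5 * x ^ 3 / 384) (1 / 8 - 5 * x ^ 2 / 128) x := by
    refine (((hasDerivAt_id' x).div_const 8).fun_sub
      (((hasDerivAt_pow 3 x).const_mul 5).div_const 384)).congr_deriv ?_
    norm_num
    ring
  have hmono : MonotoneOn (fun x => Efun x - (x / 8 - 5 * x ^ 3 / 384)) (Set.Ici 0) := by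
    refine monotoneOn_of_hasDerivWithinAt_nonneg
      (f' := fun x => (upsfun x - 1) / x ^ 2 - (1 / 8 - 5 * x ^ 2 / 128)) (convex_Ici 0)
      (continuous_Efun.sub (by fun_prop)).continuousOn ?_ ?_ <;>
      rw [interior_Ici] <;> intro x (hx : 0 < x)
    · exact ((hasDerivAt_Efun hx).fun_sub (hcubic x)).hasDerivWithinAt
    · rw [sub_nonneg, le_div_iff₀ (by positivity)]
      linarith [quartic_le_upsfun x]
  simpa [Efun_zero] using hmono Set.self_mem_Ici hρ hρ

theorem sin_two_mul_arcsin_one_div_upsfun_div {ρ : ℝ} (hρ : 0 ≤ ρ) :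
    sin (2 * arcsin (1 / upsfun ρ)) / (4 * (1 + sin (arcsin (1 / upsfun ρ)))) =
      (upsfun ρ - 1) / ρ := by
  have hu := upsfun_pos ρ
  have hsin : sin (arcsin (1 / upsfun ρ)) = 1 / upsfun ρ :=
    sin_arcsin (neg_one_lt_zero.le.trans (by positivity)) ((div_le_one hu).2 (one_le_upsfun ρ))
  have hcos : cos (arcsin (1 / upsfun ρ)) = ρ / (2 * upsfun ρ ^ 2) := by
    rw [cos_arcsin, sqrt_one_sub_one_div_upsfun_sq hρ]
  have hquot : (upsfun ρ - 1) / ρ = ρ / (2 * upsfun ρ ^ 2 * (upsfun ρ + 1)) / 2 := by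
    rw [← two_mul_upsfun_sub_one_div]
    ring
  rw [sin_two_mul, hsin, hcos, hquot]
  field_simp
  ring

/-- **Lemma 3.3**: lower bound and closed form for `E(ρ)`. -/
theorem Efun_lower_bound_and_eq (ρ : ℝ) (hρ : 0 < ρ) :
    Efun ρ ≥ ρ / 8 - 5 * ρ^3 / 384 ∧
    Efun ρ = Real.pi / 4 - Real.arcsin (1 / upsfun ρ) / 2
      - Real.sin (2 * Real.arcsin (1 / upsfun ρ))
          / (4 * (1 + Real.sin (Real.arcsin (1 / upsfun ρ)))) := by
  refine ⟨cubic_le_Efun hρ.le, ?_⟩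
  rw [sin_two_mul_arcsin_one_div_upsfun_div hρ.le, Efun, arccos]
  ring
end

section
/- Let χ be a primitive Dirichlet character mod q, q > 1. Assume that all nontrivial zeros ρ = σ + it of L(s,χ) with |t| ≤ 5/8 satisfy Re(ρ) = 1/2. Then |L'(1,χ)/L(1,χ)| ≤ (5/2) log M(q) + c, where M(q) = max_n |∑_{m≤n} χ(m)| and c = 5 log(2√3 / (ζ(9/4)/ζ(9/8))) = 15.07016…. -/
open MeasureTheory

/-- `M(q) = max_n |∑_{m ≤ n} χ(m)|`. -/
noncomputable def Mq {q : ℕ} (χ : DirichletCharacter ℂ q) : ℝ :=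
  ⨆ n : ℕ, ‖∑ m ∈ Finset.Icc 1 n, χ (m : ZMod q)‖

/-!
Put `M = M(q)`. Since `L(s, χ)` has no zero in the disc `D` of centre `9/8` and radius `5/8`, it has
a holomorphic logarithm there, and an upper bound `B` for `|L|` on `D` bounds the real part of that
logarithm. The Schwarz–Pick lemma for half-planes together with Harnack's inequality then bounds
its derivative at distance `r = 1/8` from the centre of the disc of radius `R = 5/8` by
`2R / (R - r)² = 5` times `log (B / |L(9/8, χ)|)`.

Partial summation writes `L(s, χ)` as `s ∫₁^∞ S(t) t^{-s-1} dt` with `|S(t)| ≤ min t M`, which gives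
`B = 2√3 · √M`, and comparing Euler products factor by factor gives
`|L(9/8, χ)| ≥ ζ(9/4) / ζ(9/8)`.
-/

section HalfPlane

open Complex Metric

variable {f : ℂ → ℂ} {c z : ℂ} {R A : ℝ}

lemma norm_sub_lt_norm_sub_reflection {v w : ℂ} (hv : v.re < A) (hw : w.re < A) :
    ‖w - v‖ < ‖w - (2 * A - starRingEnd ℂ v)‖ := by
  rw [← sq_lt_sq₀ (norm_nonneg _) (norm_nonneg _)]
  simp only [Complex.sq_norm, normSq_apply, sub_re, sub_im, mul_re, mul_im, conj_re, conj_im,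
    ofReal_re, ofReal_im, re_ofNat, im_ofNat]
  nlinarith [mul_pos (sub_pos.2 hv) (sub_pos.2 hw)]

lemma norm_deriv_center_le_of_re_lt (hR : 0 < R) (hf : DifferentiableOn ℂ f (ball c R))
    (hre : ∀ w ∈ ball c R, (f w).re < A) :
    ‖deriv f c‖ ≤ 2 * (A - (f c).re) / R := by
  have hc : c ∈ ball c R := mem_ball_self hR
  set a : ℂ := 2 * A - starRingEnd ℂ (f c) with ha
  have hlt (w) (hw : w ∈ ball c R) : ‖f w - f c‖ < ‖f w - a‖ :=
    norm_sub_lt_norm_sub_reflection (hre c hc) (hre w hw)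
  have hne (w) (hw : w ∈ ball c R) : f w - a ≠ 0 :=
    norm_pos_iff.1 ((norm_nonneg _).trans_lt (hlt w hw))
  have hcenter : f c - a = ((-(2 * (A - (f c).re)) : ℝ) : ℂ) := by
    apply Complex.ext <;> simp [ha]; ring
  -- As `a` is the reflection of `f c` in the line `re = A`, `g` maps into the unit disc.
  let g : ℂ → ℂ := fun w ↦ (f w - f c) / (f w - a)
  have hg : DifferentiableOn ℂ g (ball c R) := (hf.sub_const _).div (hf.sub_const _) hne
  have hg_maps : Set.MapsTo g (ball c R) (closedBall (g c) 1) := fun w hw ↦ by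
    simpa [g] using div_le_one_of_le₀ (hlt w hw).le (norm_nonneg _)
  have hf' : HasDerivAt f (deriv f c) c :=
    (hf.differentiableAt (isOpen_ball.mem_nhds hc)).hasDerivAt
  have hg' : deriv g c = deriv f c / (f c - a) := by
    refine (((hf'.sub_const (f c)).div (hf'.sub_const a) (hne c hc)).congr_deriv ?_).deriv
    field_simp [hne c hc]
    ring
  have hschwarz := norm_deriv_le_div_of_mapsTo_ball hg hg_maps hR
  have hpos : 0 < 2 * (A - (f c).re) := by linarith [hre c hc]
  rw [hg', hcenter, norm_div, norm_real, norm_neg, Real.norm_of_nonneg hpos.le,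
    div_le_iff₀ hpos] at hschwarz
  exact hschwarz.trans_eq (by ring)

lemma norm_add_lt_norm_one_add_conj_mul {a w : ℂ} (ha : ‖a‖ < 1) (hw : ‖w‖ < 1) :
    ‖w + a‖ < ‖1 + starRingEnd ℂ a * w‖ := by
  have ha' : ‖a‖ ^ 2 < 1 := by simpa using pow_lt_one₀ (norm_nonneg a) ha two_ne_zero
  have hw' : ‖w‖ ^ 2 < 1 := by simpa using pow_lt_one₀ (norm_nonneg w) hw two_ne_zero
  rw [← sq_lt_sq₀ (norm_nonneg _) (norm_nonneg _)]
  simp only [Complex.sq_norm, normSq_apply, add_re, add_im, mul_re, mul_im, conj_re, conj_im,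
    one_re, one_im] at ha' hw' ⊢
  nlinarith [mul_pos (sub_pos.2 ha') (sub_pos.2 hw')]

/-- The Möbius automorphism of the unit disc that carries `0` to `a`. It is meant for `‖a‖ < 1`,
where the denominator has no zero in the disc. -/
noncomputable def discMobius (a w : ℂ) : ℂ :=
  (w + a) / (1 + starRingEnd ℂ a * w)

section discMobius

variable {a w : ℂ}

lemma one_add_conj_mul_ne_zero (ha : ‖a‖ < 1) (hw : ‖w‖ < 1) : 1 + starRingEnd ℂ a * w ≠ 0 :=
  norm_pos_iff.1 ((norm_nonneg _).trans_lt (norm_add_lt_norm_one_add_conj_mul ha hw))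

lemma norm_discMobius_lt_one (ha : ‖a‖ < 1) (hw : ‖w‖ < 1) : ‖discMobius a w‖ < 1 := by
  rw [discMobius, norm_div, div_lt_one (norm_pos_iff.2 (one_add_conj_mul_ne_zero ha hw))]
  exact norm_add_lt_norm_one_add_conj_mul ha hw

lemma differentiableAt_discMobius (ha : ‖a‖ < 1) (hw : ‖w‖ < 1) :
    DifferentiableAt ℂ (discMobius a) w :=
  .div (by fun_prop) (by fun_prop) (one_add_conj_mul_ne_zero ha hw)

@[simp]
lemma discMobius_zero (a : ℂ) : discMobius a 0 = a := by simp [discMobius]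

lemma hasDerivAt_discMobius_zero (a : ℂ) :
    HasDerivAt (discMobius a) ((1 - ‖a‖ ^ 2 : ℝ) : ℂ) 0 := by
  have hnum : HasDerivAt (fun w ↦ w + a) 1 0 := (hasDerivAt_id 0).add_const a
  have hden : HasDerivAt (fun w ↦ 1 + starRingEnd ℂ a * w) (starRingEnd ℂ a) 0 := by
    simpa using ((hasDerivAt_id (0 : ℂ)).const_mul (starRingEnd ℂ a)).const_add 1
  refine (hnum.div hden (by simp)).congr_deriv ?_
  simp [mul_conj']

end discMobius

lemma norm_deriv_le_of_re_lt (hf : DifferentiableOn ℂ f (ball c R))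
    (hre : ∀ w ∈ ball c R, (f w).re < A) (hz : z ∈ ball c R) :
    ‖deriv f z‖ ≤ 2 * R * (A - (f z).re) / (R ^ 2 - dist z c ^ 2) := by
  have hR : 0 < R := pos_of_mem_ball hz
  have hR' : (R : ℂ) ≠ 0 := ofReal_ne_zero.2 hR.ne'
  let a : ℂ := (z - c) / R
  have ha_norm : ‖a‖ = dist z c / R := by
    rw [norm_div, norm_real, Real.norm_of_nonneg hR.le, dist_eq_norm]
  have ha : ‖a‖ < 1 := by rw [ha_norm, div_lt_one hR]; exact hz
  let φ : ℂ → ℂ := fun w ↦ c + R * discMobius a w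
  have hφ_maps : Set.MapsTo φ (ball 0 1) (ball c R) := fun w hw ↦ by
    have := norm_discMobius_lt_one ha (mem_ball_zero_iff.1 hw)
    simpa [φ, abs_of_pos hR] using mul_lt_of_lt_one_right hR this
  have hφ : DifferentiableOn ℂ φ (ball 0 1) := fun w hw ↦
    (((differentiableAt_discMobius ha (mem_ball_zero_iff.1 hw)).const_mul _).const_add
      _).differentiableWithinAt
  have hφ0 : φ 0 = z := by simp [φ, a, mul_div_cancel₀ _ hR']
  have hcomp : HasDerivAt (f ∘ φ) (deriv f z * (R * (1 - ‖a‖ ^ 2 : ℝ))) 0 := by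
    refine HasDerivAt.comp 0 ?_ (((hasDerivAt_discMobius_zero a).const_mul _).const_add _)
    rw [hφ0]
    exact (hf.differentiableAt (isOpen_ball.mem_nhds hz)).hasDerivAt
  have hcenter := norm_deriv_center_le_of_re_lt one_pos (hf.comp hφ hφ_maps)
    fun w hw ↦ hre _ (hφ_maps hw)
  have hgap : 0 < R ^ 2 - dist z c ^ 2 := sub_pos.2 (by gcongr; exact hz)
  have hscale : R * (1 - ‖a‖ ^ 2) = (R ^ 2 - dist z c ^ 2) / R := by rw [ha_norm]; field_simp
  rw [hcomp.deriv, ← ofReal_mul, hscale, norm_mul, norm_real, Real.norm_of_nonneg (by positivity),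
    Function.comp_apply, hφ0, div_one, mul_div_assoc', div_le_iff₀ hR] at hcenter
  rw [le_div_iff₀ hgap]
  exact hcenter.trans_eq (by ring)

lemma sub_re_le_of_re_lt (hf : DifferentiableOn ℂ f (ball c R))
    (hre : ∀ w ∈ ball c R, (f w).re < A) (hz : z ∈ ball c R) :
    A - (f z).re ≤ (A - (f c).re) * ((R + dist z c) / (R - dist z c)) := by
  have hR : 0 < R := pos_of_mem_ball hz
  have hgap : 0 < R - dist z c := sub_pos.2 hz
  have hshift : Set.MapsTo (fun w ↦ c + w) (ball 0 R) (ball c R) := fun w hw ↦ by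
    simpa using hw
  have hbound := borelCaratheodory_zero (f := fun w ↦ f (c + w) - f c) (M := A - (f c).re)
    (z := z - c) (sub_pos.2 (hre c (mem_ball_self hR)))
    ((hf.comp (by fun_prop) hshift).sub_const _)
    (fun w hw ↦ by simpa using (hre _ (hshift hw)).le)
    hR (by simpa [dist_eq_norm] using hz) (by simp)
  rw [add_sub_cancel, ← dist_eq_norm z c] at hbound
  calc A - (f z).re = (A - (f c).re) - (f z - f c).re := by rw [sub_re]; ring
    _ ≤ (A - (f c).re) + 2 * (A - (f c).re) * dist z c / (R - dist z c) := by
      linarith [neg_le_of_abs_le ((abs_re_le_norm (f z - f c)).trans hbound)]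
    _ = _ := by field_simp; ring

lemma norm_deriv_le_of_re_lt_of_center (hf : DifferentiableOn ℂ f (ball c R))
    (hre : ∀ w ∈ ball c R, (f w).re < A) (hz : z ∈ ball c R) :
    ‖deriv f z‖ ≤ 2 * R / (R - dist z c) ^ 2 * (A - (f c).re) := by
  have hR : 0 < R := pos_of_mem_ball hz
  have hgap : 0 < R - dist z c := sub_pos.2 hz
  have hfactor : R ^ 2 - dist z c ^ 2 = (R + dist z c) * (R - dist z c) := by ring
  calc ‖deriv f z‖ ≤ 2 * R * (A - (f z).re) / (R ^ 2 - dist z c ^ 2) :=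
        norm_deriv_le_of_re_lt hf hre hz
    _ ≤ 2 * R * ((A - (f c).re) * ((R + dist z c) / (R - dist z c))) /
          (R ^ 2 - dist z c ^ 2) := by
      rw [hfactor]
      gcongr
      exact sub_re_le_of_re_lt hf hre hz
    _ = 2 * R / (R - dist z c) ^ 2 * (A - (f c).re) := by rw [hfactor]; field_simp

lemma exists_hasDerivAt_logDeriv_exp_eq (hf : DifferentiableOn ℂ f (ball c R))
    (hne : ∀ w ∈ ball c R, f w ≠ 0) :
    ∃ g : ℂ → ℂ, ∀ w ∈ ball c R, HasDerivAt g (logDeriv f w) w ∧ exp (g w) = f w := by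
  rcases le_or_gt R 0 with hR | hR
  · simp [ball_eq_empty.2 hR]
  have hc : c ∈ ball c R := mem_ball_self hR
  have hlog : DifferentiableOn ℂ (logDeriv f) (ball c R) := (hf.deriv isOpen_ball).div hf hne
  obtain ⟨g, hgc, hg⟩ := hlog.isExactOn_ball.with_val_at c (log (f c))
  refine ⟨g, fun w hw ↦ ⟨hg w hw, ?_⟩⟩
  have hder (u) (hu : u ∈ ball c R) : HasDerivAt (fun u ↦ f u * exp (-g u)) 0 u := by
    have hfu := (hf.differentiableAt (isOpen_ball.mem_nhds hu)).hasDerivAt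
    refine (hfu.mul (hg u hu).neg.cexp).congr_deriv ?_
    rw [logDeriv_apply]
    field_simp [hne u hu]
    ring
  have hconst : f w * exp (-g w) = f c * exp (-g c) :=
    isOpen_ball.is_const_of_deriv_eq_zero (convex_ball c R).isPreconnected
      (fun u hu ↦ (hder u hu).differentiableAt.differentiableWithinAt)
      (fun u hu ↦ (hder u hu).deriv) hw hc
  rw [hgc, exp_neg (log _), exp_log (hne c hc), mul_inv_cancel₀ (hne c hc), exp_neg,
    mul_inv_eq_one₀ (exp_ne_zero _)] at hconst
  exact hconst.symm

lemma norm_logDeriv_le_of_norm_lt {B : ℝ} (hf : DifferentiableOn ℂ f (ball c R))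
    (hne : ∀ w ∈ ball c R, f w ≠ 0) (hB : ∀ w ∈ ball c R, ‖f w‖ < B) (hz : z ∈ ball c R) :
    ‖logDeriv f z‖ ≤ 2 * R / (R - dist z c) ^ 2 * Real.log (B / ‖f c‖) := by
  obtain ⟨g, hg⟩ := exists_hasDerivAt_logDeriv_exp_eq hf hne
  have hc : c ∈ ball c R := mem_ball_self (pos_of_mem_ball hz)
  have hre (w) (hw : w ∈ ball c R) : (g w).re = Real.log ‖f w‖ := by
    rw [← (hg w hw).2, norm_exp, Real.log_exp]
  have hpos (w) (hw : w ∈ ball c R) : 0 < ‖f w‖ := norm_pos_iff.2 (hne w hw)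
  have hlt (w) (hw : w ∈ ball c R) : (g w).re < Real.log B := by
    rw [hre w hw]
    exact Real.log_lt_log (hpos w hw) (hB w hw)
  have hbound := norm_deriv_le_of_re_lt_of_center
    (fun w hw ↦ (hg w hw).1.differentiableAt.differentiableWithinAt) hlt hz
  rwa [(hg z hz).1.deriv, hre c hc, ← Real.log_div ((hpos c hc).trans (hB c hc)).ne'
    (hpos c hc).ne'] at hbound

end HalfPlane

section EulerProduct

open Complex Filter

lemma tendsto_eulerProduct_riemannZeta_re {x : ℝ} (hx : 1 < x) :
    Tendsto (fun n : ℕ ↦ ∏ p ∈ n.primesBelow, (1 - (p : ℝ) ^ (-x))⁻¹) atTop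
      (nhds (riemannZeta x).re) := by
  have hcast (n : ℕ) : ∏ p ∈ n.primesBelow, (1 - (p : ℂ) ^ (-(x : ℂ)))⁻¹ =
      ((∏ p ∈ n.primesBelow, (1 - (p : ℝ) ^ (-x))⁻¹ : ℝ) : ℂ) := by
    push_cast
    refine Finset.prod_congr rfl fun p _ ↦ ?_
    rw [ofReal_cpow p.cast_nonneg, ofReal_natCast, ofReal_neg]
  have hprod := riemannZeta_eulerProduct (s := x) (by simpa using hx)
  exact ((continuous_re.tendsto _).comp hprod).congr fun n ↦ by
    rw [Function.comp_apply, hcast, ofReal_re]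

lemma inv_one_sub_sq_le_norm_inv_one_sub_mul {z : ℂ} {y : ℝ} (hz : ‖z‖ ≤ y) (hy : y < 1) :
    (1 - y ^ 2)⁻¹ ≤ ‖(1 - z)⁻¹‖ * (1 - y)⁻¹ := by
  have hupper : ‖1 - z‖ ≤ 1 + y := (norm_sub_le _ _).trans (by simpa using hz)
  have hlower : 0 < ‖1 - z‖ := by
    have := norm_sub_norm_le 1 z
    rw [norm_one] at this
    linarith
  rw [norm_inv, ← mul_inv]
  refine inv_anti₀ (mul_pos hlower (sub_pos.2 hy)) ?_
  calc ‖1 - z‖ * (1 - y) ≤ (1 + y) * (1 - y) :=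
        mul_le_mul_of_nonneg_right hupper (sub_nonneg.2 hy.le)
    _ = 1 - y ^ 2 := by ring

lemma riemannZeta_two_mul_re_le_norm_LFunction_mul {q : ℕ} [NeZero q]
    (χ : DirichletCharacter ℂ q) {s : ℂ} (hs : 1 < s.re) :
    (riemannZeta (2 * s.re : ℝ)).re ≤ ‖χ.LFunction s‖ * (riemannZeta s.re).re := by
  rw [χ.LFunction_eq_LSeries hs]
  refine le_of_tendsto_of_tendsto (tendsto_eulerProduct_riemannZeta_re (by linarith))
    ((χ.LSeries_eulerProduct hs).norm.mul (tendsto_eulerProduct_riemannZeta_re hs))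
    (.of_forall fun n ↦ ?_)
  simp only [norm_prod, ← Finset.prod_mul_distrib]
  have hlt {p : ℕ} (hp : p ∈ n.primesBelow) {x : ℝ} (hx : 0 < x) : (p : ℝ) ^ (-x) < 1 :=
    Real.rpow_lt_one_of_one_lt_of_neg (mod_cast (Nat.prime_of_mem_primesBelow hp).one_lt)
      (neg_lt_zero.2 hx)
  refine Finset.prod_le_prod (fun p hp ↦ inv_nonneg.2 (sub_nonneg.2 (hlt hp (by linarith)).le))
    fun p hp ↦ ?_
  have hnorm : ‖χ p * (p : ℂ) ^ (-s)‖ ≤ (p : ℝ) ^ (-s.re) := by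
    rw [norm_mul, norm_natCast_cpow_of_pos (Nat.prime_of_mem_primesBelow hp).pos, neg_re]
    exact mul_le_of_le_one_left (by positivity) (χ.norm_le_one _)
  have hsq : (p : ℝ) ^ (-(2 * s.re)) = ((p : ℝ) ^ (-s.re)) ^ 2 := by
    rw [← Real.rpow_mul_natCast p.cast_nonneg]
    congr 1
    push_cast
    ring
  rw [hsq]
  exact inv_one_sub_sq_le_norm_inv_one_sub_mul hnorm (hlt hp (by linarith))

lemma riemannZeta_re_div_mem_Ioc_norm_LFunction {q : ℕ} [NeZero q]
    (χ : DirichletCharacter ℂ q) {s : ℂ} (hs : 1 < s.re) :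
    (riemannZeta (2 * s.re : ℝ)).re / (riemannZeta s.re).re ∈ Set.Ioc 0 ‖χ.LFunction s‖ := by
  have hpos : 0 < (riemannZeta s.re).re := riemannZeta_re_pos_of_one_lt hs
  exact ⟨div_pos (riemannZeta_re_pos_of_one_lt (by linarith)) hpos,
    (div_le_iff₀ hpos).2 (riemannZeta_two_mul_re_le_norm_LFunction_mul χ hs)⟩

end EulerProduct

section ZMod

variable {q : ℕ} [NeZero q]

lemma sum_range_natCast_zmod {E : Type*} [AddCommMonoid E] (F : ZMod q → E) :
    ∑ m ∈ Finset.range q, F m = ∑ a, F a :=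
  Finset.sum_nbij' (fun m ↦ (m : ZMod q)) ZMod.val (by simp)
    (fun a _ ↦ by simpa using a.val_lt)
    (fun m hm ↦ ZMod.val_cast_of_lt (by simpa using hm)) (by simp) (by simp)

lemma sum_Icc_one_natCast_zmod {E : Type*} [AddCommMonoid E] (F : ZMod q → E) :
    ∑ m ∈ Finset.Icc 1 q, F m = ∑ a, F a := by
  calc ∑ m ∈ Finset.Icc 1 q, F m = ∑ m ∈ Finset.range q, F (m + 1) := by
        rw [Finset.range_eq_Ico, ← Finset.Ico_add_one_right_eq_Icc]
        simpa using (Finset.sum_Ico_add' (fun m : ℕ ↦ F m) 0 q 1).symm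
    _ = ∑ a, F (a + 1) := sum_range_natCast_zmod fun a ↦ F (a + 1)
    _ = ∑ a, F a := Equiv.sum_comp (Equiv.addRight (1 : ZMod q)) F

lemma periodic_sum_Icc_one_natCast_zmod {E : Type*} [AddCommMonoid E] {F : ZMod q → E}
    (hF : ∑ a, F a = 0) : Function.Periodic (fun n : ℕ ↦ ∑ m ∈ Finset.Icc 1 n, F m) q := by
  intro n
  induction n with
  | zero => simp [sum_Icc_one_natCast_zmod, hF]
  | succ n ih =>
    simp only [add_right_comm n 1 q, Finset.sum_Icc_succ_top (Nat.le_add_left 1 _)] at ih ⊢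
    simp [ih]

variable {χ : DirichletCharacter ℂ q}

lemma norm_sum_Icc_le_Mq (hχ : χ ≠ 1) (n : ℕ) :
    ‖∑ m ∈ Finset.Icc 1 n, χ (m : ZMod q)‖ ≤ Mq χ := by
  have hper := (periodic_sum_Icc_one_natCast_zmod (MulChar.sum_eq_zero_of_ne_one hχ)).comp norm
  let P : ℕ → ℝ := fun n ↦ ‖∑ m ∈ Finset.Icc 1 n, χ (m : ZMod q)‖
  refine le_ciSup (f := P) (((Set.finite_Iio q).image P).subset ?_).bddAbove n
  rintro _ ⟨k, rfl⟩
  exact ⟨k % q, Nat.mod_lt k (NeZero.pos q), hper.map_mod_nat k⟩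

lemma one_le_Mq (hχ : χ ≠ 1) : 1 ≤ Mq χ := by
  simpa using norm_sum_Icc_le_Mq hχ 1

end ZMod

/-- The summatory function `t ↦ ∑_{1 ≤ k ≤ t} f k` of the sequence `f`, with `f 0` left out as in
the theory of Dirichlet series. -/
noncomputable def summatory (f : ℕ → ℂ) (t : ℝ) : ℂ :=
  ∑ k ∈ Finset.Icc 1 ⌊t⌋₊, f k

section summatory

open Set

variable {f : ℕ → ℂ} {M : ℝ}

lemma measurable_summatory (f : ℕ → ℂ) : Measurable (summatory f) :=
  (measurable_from_top (f := fun n ↦ ∑ k ∈ Finset.Icc 1 n, f k)).comp Nat.measurable_floor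

lemma summatory_of_lt_one {t : ℝ} (ht : t < 1) : summatory f t = 0 := by
  simp [summatory, Nat.floor_eq_zero.2 ht]

lemma norm_summatory_le (hf : ∀ n, ‖f n‖ ≤ 1) {t : ℝ} (ht : 0 ≤ t) : ‖summatory f t‖ ≤ t :=
  calc ‖summatory f t‖ ≤ ∑ _ ∈ Finset.Icc 1 ⌊t⌋₊, (1 : ℝ) :=
        norm_sum_le_of_le _ fun k _ ↦ hf k
    _ = ⌊t⌋₊ := by simp
    _ ≤ t := Nat.floor_le ht

lemma mellin_summatory_neg (f : ℕ → ℂ) (s : ℂ) :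
    mellin (summatory f) (-s) = ∫ t in Ioi (1 : ℝ), summatory f t * (t : ℂ) ^ (-(s + 1)) := by
  have hintegrand (t : ℝ) :
      (t : ℂ) ^ (-s - 1) • summatory f t = summatory f t * (t : ℂ) ^ (-(s + 1)) := by
    rw [smul_eq_mul, mul_comm, neg_add']
  simp only [mellin, hintegrand]
  rw [← integral_Ici_eq_integral_Ioi (x := 1)]
  refine setIntegral_eq_of_subset_of_forall_sdiff_eq_zero measurableSet_Ioi
    (fun t ht ↦ mem_Ioi.2 (one_pos.trans_le ht)) fun t ht ↦ ?_
  rw [summatory_of_lt_one (not_le.1 ht.2), zero_mul]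

lemma differentiableAt_mellin_summatory (hM : ∀ t, ‖summatory f t‖ ≤ M) {s : ℂ} (hs : s.re < 0) :
    DifferentiableAt ℂ (mellin (summatory f)) s := by
  have hloc : LocallyIntegrableOn (summatory f) (Ioi 0) :=
    ((continuous_const (y := M)).locallyIntegrable.mono
      (measurable_summatory f).aestronglyMeasurable
      (.of_forall fun t ↦ (hM t).trans (Real.le_norm_self M))).locallyIntegrableOn _
  refine mellin_differentiableAt_of_isBigO_rpow (a := 0) (b := s.re - 1) hloc ?_ hs ?_ (by simp)
  · exact .of_bound M (.of_forall fun t ↦ by simpa using hM t)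
  · refine .of_bound 0 ?_
    filter_upwards [nhdsWithin_le_nhds (gt_mem_nhds (one_pos (α := ℝ)))] with t ht
    simp [summatory_of_lt_one ht]

end summatory

section Integral

open Set

variable {M σ : ℝ}

lemma eqOn_min_mul_rpow_Ioc (M σ : ℝ) :
    EqOn (fun t ↦ min t M * t ^ (-σ - 1)) (fun t ↦ t ^ (-σ)) (Ioc 1 M) := fun t ht ↦ by
  have ht0 : t ≠ 0 := (one_pos.trans ht.1).ne'
  simp only [min_eq_left ht.2, Real.rpow_sub_one ht0]
  field_simp

lemma eqOn_min_mul_rpow_Ioi (M σ : ℝ) :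
    EqOn (fun t ↦ min t M * t ^ (-σ - 1)) (fun t ↦ M * t ^ (-σ - 1)) (Ioi M) := fun t ht ↦ by
  simp only [min_eq_right (mem_Ioi.1 ht).le]

lemma integrableOn_rpow_neg_Ioc (hM : 1 ≤ M) (σ : ℝ) :
    IntegrableOn (fun t : ℝ ↦ t ^ (-σ)) (Ioc 1 M) :=
  (intervalIntegrable_iff_integrableOn_Ioc_of_le hM).1 <|
    intervalIntegral.intervalIntegrable_rpow (.inr (notMem_uIcc_of_lt one_pos (by linarith)))

lemma integrableOn_min_mul_rpow_Ioc (hM : 1 ≤ M) (σ : ℝ) :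
    IntegrableOn (fun t : ℝ ↦ min t M * t ^ (-σ - 1)) (Ioc 1 M) :=
  (integrableOn_rpow_neg_Ioc hM σ).congr_fun (eqOn_min_mul_rpow_Ioc M σ).symm measurableSet_Ioc

lemma integrableOn_min_mul_rpow_Ioi (hM : 0 < M) (hσ : 0 < σ) :
    IntegrableOn (fun t : ℝ ↦ min t M * t ^ (-σ - 1)) (Ioi M) :=
  IntegrableOn.congr_fun ((integrableOn_Ioi_rpow_of_lt (by linarith) hM).const_mul M)
    (eqOn_min_mul_rpow_Ioi M σ).symm measurableSet_Ioi

lemma integral_min_mul_rpow (hM : 1 ≤ M) (hσ : 0 < σ) :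
    ∫ t in Ioi (1 : ℝ), min t M * t ^ (-σ - 1) =
      (∫ t in (1 : ℝ)..M, t ^ (-σ)) + M ^ (1 - σ) / σ := by
  have hM0 : 0 < M := by linarith
  rw [← Ioc_union_Ioi_eq_Ioi hM, setIntegral_union (Ioc_disjoint_Ioi le_rfl) measurableSet_Ioi
    (integrableOn_min_mul_rpow_Ioc hM σ) (integrableOn_min_mul_rpow_Ioi hM0 hσ),
    setIntegral_congr_fun measurableSet_Ioc (eqOn_min_mul_rpow_Ioc M σ),
    setIntegral_congr_fun measurableSet_Ioi (eqOn_min_mul_rpow_Ioi M σ),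
    intervalIntegral.integral_of_le hM, integral_const_mul,
    integral_Ioi_rpow_of_lt (by linarith) hM0, sub_add_cancel, sub_eq_neg_add 1 σ,
    Real.rpow_add_one hM0.ne']
  field_simp

lemma integral_rpow_neg_le {a : ℝ} (hM : 1 ≤ M) (ha : a < 1) (haσ : a ≤ σ) :
    ∫ t in (1 : ℝ)..M, t ^ (-σ) ≤ (M ^ (1 - a) - 1) / (1 - a) := by
  calc ∫ t in (1 : ℝ)..M, t ^ (-σ) ≤ ∫ t in (1 : ℝ)..M, t ^ (-a) := by
        rw [intervalIntegral.integral_of_le hM, intervalIntegral.integral_of_le hM]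
        exact setIntegral_mono_on (integrableOn_rpow_neg_Ioc hM σ) (integrableOn_rpow_neg_Ioc hM a)
          measurableSet_Ioc fun t ht ↦
            Real.rpow_le_rpow_of_exponent_le ht.1.le (neg_le_neg haσ)
    _ = (M ^ (1 - a) - 1) / (1 - a) := by
      rw [integral_rpow (.inl (by linarith)), Real.one_rpow, neg_add_eq_sub]

lemma integral_rpow_neg_le_two_mul_sqrt (hM : 1 ≤ M) (hσ : 1 / 2 ≤ σ) :
    ∫ t in (1 : ℝ)..M, t ^ (-σ) ≤ 2 * √M := by
  refine (integral_rpow_neg_le hM (by norm_num) hσ).trans ?_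
  rw [sub_half, ← Real.sqrt_eq_rpow]
  linarith

lemma integral_rpow_neg_le_sqrt (hM : 1 ≤ M) (hσ : 3 / 4 ≤ σ) :
    ∫ t in (1 : ℝ)..M, t ^ (-σ) ≤ √M := by
  refine (integral_rpow_neg_le hM (by norm_num) hσ).trans ?_
  have hsq : √M = (M ^ (1 - 3 / 4 : ℝ)) ^ 2 := by
    rw [← Real.rpow_mul_natCast (by linarith), Real.sqrt_eq_rpow]
    norm_num
  rw [hsq, div_le_iff₀ (by norm_num)]
  nlinarith [sq_nonneg (M ^ (1 - 3 / 4 : ℝ) - 2)]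

end Integral

section LFunction

open Set Complex Metric

variable {q : ℕ} [NeZero q] {χ : DirichletCharacter ℂ q} {s : ℂ}

lemma norm_summatory_le_Mq (hχ : χ ≠ 1) (t : ℝ) : ‖summatory (fun n ↦ χ n) t‖ ≤ Mq χ :=
  norm_sum_Icc_le_Mq hχ ⌊t⌋₊

lemma LFunction_eq_mul_integral_summatory (hχ : χ ≠ 1) (hs : 0 < s.re) :
    χ.LFunction s =
      s * ∫ t in Ioi (1 : ℝ), summatory (fun n ↦ χ n) t * (t : ℂ) ^ (-(s + 1)) := by
  rw [← mellin_summatory_neg]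
  have hopen (a : ℝ) : IsOpen {z : ℂ | a < z.re} := isOpen_lt continuous_const continuous_re
  have hL : AnalyticOnNhd ℂ χ.LFunction {z | 0 < z.re} :=
    (χ.differentiable_LFunction hχ).differentiableOn.analyticOnNhd (hopen 0)
  have hI : AnalyticOnNhd ℂ (fun z ↦ z * mellin (summatory fun n ↦ χ n) (-z)) {z | 0 < z.re} := by
    refine DifferentiableOn.analyticOnNhd (fun z hz ↦ ?_) (hopen 0)
    have hmellin := differentiableAt_mellin_summatory (norm_summatory_le_Mq hχ) (s := -z)
      (by simpa using hz)
    exact (differentiableAt_id.mul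
      (hmellin.comp z differentiableAt_id.neg)).differentiableWithinAt
  refine hL.eqOn_of_preconnected_of_eventuallyEq hI (convex_halfSpace_re_gt 0).isPreconnected
    (z₀ := 2) (by simp) ?_ hs
  filter_upwards [(hopen 1).mem_nhds (by simp : (2 : ℂ) ∈ {z | 1 < z.re})] with z hz
  rw [mellin_summatory_neg, χ.LFunction_eq_LSeries hz]
  refine LSeries_eq_mul_integral (fun n ↦ χ n) le_rfl (one_pos.trans hz)
    (ZMod.LSeriesSummable_of_one_lt_re χ hz) (.of_bound (Mq χ) (.of_forall fun n ↦ ?_))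
  simpa using norm_sum_Icc_le_Mq hχ n

lemma norm_LFunction_le (hχ : χ ≠ 1) (hs : 0 < s.re) :
    ‖χ.LFunction s‖ ≤
      ‖s‖ * ((∫ t in (1 : ℝ)..Mq χ, t ^ (-s.re)) + Mq χ ^ (1 - s.re) / s.re) := by
  have hM := one_le_Mq hχ
  rw [LFunction_eq_mul_integral_summatory hχ hs, norm_mul, ← integral_min_mul_rpow hM hs]
  have hint : IntegrableOn (fun t ↦ min t (Mq χ) * t ^ (-s.re - 1)) (Ioi 1) := by
    rw [← Ioc_union_Ioi_eq_Ioi hM]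
    exact (integrableOn_min_mul_rpow_Ioc hM _).union
      (integrableOn_min_mul_rpow_Ioi (one_pos.trans_le hM) hs)
  refine mul_le_mul_of_nonneg_left (norm_integral_le_of_norm_le hint ?_) (norm_nonneg s)
  refine (ae_restrict_iff' measurableSet_Ioi).2 (.of_forall fun t (ht : 1 < t) ↦ ?_)
  have ht0 : 0 < t := one_pos.trans ht
  rw [norm_mul, norm_cpow_eq_rpow_re_of_pos ht0, neg_re, add_re, one_re, neg_add']
  gcongr
  exact le_min (norm_summatory_le (fun n ↦ χ.norm_le_one n) ht0.le) (norm_summatory_le_Mq hχ t)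

lemma norm_LFunction_le_mul_sqrt_Mq (hχ : χ ≠ 1) (hs : 1 / 2 ≤ s.re) {C : ℝ}
    (hC : ∫ t in (1 : ℝ)..Mq χ, t ^ (-s.re) ≤ C * √(Mq χ)) :
    ‖χ.LFunction s‖ ≤ ‖s‖ * (C + 1 / s.re) * √(Mq χ) := by
  have hM := one_le_Mq hχ
  have hpow : Mq χ ^ (1 - s.re) ≤ √(Mq χ) := by
    rw [Real.sqrt_eq_rpow]
    exact Real.rpow_le_rpow_of_exponent_le hM (by linarith)
  calc ‖χ.LFunction s‖
      ≤ ‖s‖ * ((∫ t in (1 : ℝ)..Mq χ, t ^ (-s.re)) + Mq χ ^ (1 - s.re) / s.re) :=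
        norm_LFunction_le hχ (by linarith)
    _ ≤ ‖s‖ * (C * √(Mq χ) + √(Mq χ) / s.re) := by gcongr
    _ = ‖s‖ * (C + 1 / s.re) * √(Mq χ) := by ring

lemma re_bounds_and_abs_im_lt_of_mem_ball (hs : s ∈ ball (9 / 8 : ℂ) (5 / 8)) :
    1 / 2 < s.re ∧ s.re < 7 / 4 ∧ |s.im| < 5 / 8 := by
  have hs' : ‖s - 9 / 8‖ < 5 / 8 := by rwa [← dist_eq_norm]
  have hre := abs_lt.1 ((abs_re_le_norm _).trans_lt hs')
  have him := (abs_im_le_norm _).trans_lt hs'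
  norm_num at hre him
  exact ⟨by linarith, by linarith, him⟩

lemma norm_sq_lt_of_mem_ball_ofReal {a r : ℝ} (hs : s ∈ ball (a : ℂ) r) :
    ‖s‖ ^ 2 < 2 * a * s.re + r ^ 2 - a ^ 2 := by
  have hs' : ‖s - a‖ ^ 2 < r ^ 2 := by
    rw [← dist_eq_norm]
    gcongr
    exact hs
  rw [Complex.sq_norm, normSq_apply] at hs' ⊢
  simp only [sub_re, sub_im, ofReal_re, ofReal_im] at hs'
  linarith

lemma mul_add_one_div_lt_two_mul_sqrt_three {r x C : ℝ} (hx : 0 < x)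
    (h : r ^ 2 * (C * x + 1) ^ 2 < 12 * x ^ 2) : r * (C + 1 / x) < 2 * √3 := by
  have hsq : (r * (C * x + 1)) ^ 2 < (2 * √3 * x) ^ 2 := by
    rw [mul_pow, mul_pow, mul_pow, Real.sq_sqrt (by norm_num)]
    linarith
  calc r * (C + 1 / x) = r * (C * x + 1) / x := by field_simp
    _ < 2 * √3 := (div_lt_iff₀ hx).2 (lt_of_pow_lt_pow_left₀ 2 (by positivity) hsq)

lemma norm_LFunction_lt_of_mem_ball (hχ : χ ≠ 1) (hs : s ∈ ball (9 / 8 : ℂ) (5 / 8)) :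
    ‖χ.LFunction s‖ < 2 * √3 * √(Mq χ) := by
  obtain ⟨hlo, hhi, -⟩ := re_bounds_and_abs_im_lt_of_mem_ball hs
  have hM := one_le_Mq hχ
  have hnorm : ‖s‖ ^ 2 < 9 / 4 * s.re - 7 / 8 := by
    convert norm_sq_lt_of_mem_ball_ofReal (a := 9 / 8) (by simpa using hs) using 1
    ring
  have hroot : 0 < √(Mq χ) := Real.sqrt_pos.2 (one_pos.trans_le hM)
  have hx : 0 < s.re := by linarith
  suffices ∃ C, ∫ t in (1 : ℝ)..Mq χ, t ^ (-s.re) ≤ C * √(Mq χ) ∧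
      (9 / 4 * s.re - 7 / 8) * (C * s.re + 1) ^ 2 < 12 * s.re ^ 2 by
    obtain ⟨C, hC, hpoly⟩ := this
    refine (norm_LFunction_le_mul_sqrt_Mq hχ hlo.le hC).trans_lt
      (mul_lt_mul_of_pos_right (mul_add_one_div_lt_two_mul_sqrt_three hx ?_) hroot)
    exact (mul_le_mul_of_nonneg_right hnorm.le (sq_nonneg _)).trans_lt hpoly
  -- The constant `2` is affordable only for small `s.re`; from `3/4` on, `1` is available because
  -- `4 * (y - 1) ≤ y ^ 2` for `y = M ^ (1 / 4)`.
  rcases le_total s.re (3 / 4) with h | h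
  · refine ⟨2, integral_rpow_neg_le_two_mul_sqrt hM hlo.le, ?_⟩
    nlinarith [mul_nonneg (sub_nonneg.2 hlo.le) (sub_nonneg.2 h)]
  · refine ⟨1, (one_mul √(Mq χ)).symm ▸ integral_rpow_neg_le_sqrt hM h, ?_⟩
    nlinarith [mul_nonneg (sub_nonneg.2 hhi.le) (sub_nonneg.2 h)]

end LFunction

section LlogDeriv

open Metric

lemma ne_one_of_isPrimitive {q : ℕ} {χ : DirichletCharacter ℂ q} (hq : 1 < q)
    (hχ : χ.IsPrimitive) : χ ≠ 1 := by
  have : NeZero q := .of_gt hq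
  rintro rfl
  rw [DirichletCharacter.isPrimitive_def, DirichletCharacter.conductor_one] at hχ
  exact hq.ne hχ

variable {q : ℕ} [NeZero q] {χ : DirichletCharacter ℂ q}

lemma LFunction_ne_zero_of_mem_ball (hχ : χ ≠ 1)
    (hGRH : ∀ ρ : ℂ, χ.LFunction ρ = 0 → 0 < ρ.re → ρ.re < 1 → |ρ.im| ≤ 5 / 8 → ρ.re = 1 / 2)
    {s : ℂ} (hs : s ∈ ball (9 / 8 : ℂ) (5 / 8)) : χ.LFunction s ≠ 0 := by
  obtain ⟨hlo, -, him⟩ := re_bounds_and_abs_im_lt_of_mem_ball hs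
  rcases le_or_gt 1 s.re with hone | hone
  · exact χ.LFunction_ne_zero_of_one_le_re (.inl hχ) hone
  · exact fun hzero ↦ hlo.ne' (hGRH s hzero (by linarith) hone him.le)

theorem LlogDeriv_at_one_bound_general (hχ : χ ≠ 1)
    (hzero : ∀ s ∈ ball (9 / 8 : ℂ) (5 / 8), χ.LFunction s ≠ 0) :
    ‖deriv χ.LFunction 1 / χ.LFunction 1‖ ≤ 5 / 2 * Real.log (Mq χ) +
      5 * Real.log (2 * √3 / ((riemannZeta (9 / 4)).re / (riemannZeta (9 / 8)).re)) := by
  set a := (riemannZeta (9 / 4)).re / (riemannZeta (9 / 8)).re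
  obtain ⟨ha, hlower⟩ : a ∈ Set.Ioc 0 ‖χ.LFunction (9 / 8)‖ := by
    convert riemannZeta_re_div_mem_Ioc_norm_LFunction χ (s := 9 / 8) (by norm_num) using 5 <;>
      norm_num
  have hM : 0 < Mq χ := one_pos.trans_le (one_le_Mq hχ)
  have hdist : dist (1 : ℂ) (9 / 8) = 1 / 8 := by
    rw [dist_eq_norm]
    norm_num
  have hbound := norm_logDeriv_le_of_norm_lt (χ.differentiable_LFunction hχ).differentiableOn
    hzero (fun s hs ↦ norm_LFunction_lt_of_mem_ball hχ hs) (z := 1)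
    (by rw [mem_ball, hdist]; norm_num)
  calc ‖deriv χ.LFunction 1 / χ.LFunction 1‖
      ≤ 5 * Real.log (2 * √3 * √(Mq χ) / ‖χ.LFunction (9 / 8)‖) := by
        rw [hdist, logDeriv_apply] at hbound
        exact hbound.trans_eq (by norm_num)
    _ ≤ 5 * Real.log (2 * √3 * √(Mq χ) / a) := by
        have : 0 < ‖χ.LFunction (9 / 8)‖ := ha.trans_le hlower
        gcongr
    _ = 5 / 2 * Real.log (Mq χ) + 5 * Real.log (2 * √3 / a) := by
        rw [mul_div_right_comm, Real.log_mul (by positivity) (Real.sqrt_pos.2 hM).ne',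
          Real.log_sqrt hM.le]
        ring

end LlogDeriv

/-- **Lemma 4.2**: bound on `L'(1,χ)/L(1,χ)` from a partial GRH verification. -/
theorem LlogDeriv_at_one_bound
    (q : ℕ) [NeZero q] (hq : 1 < q)
    (χ : DirichletCharacter ℂ q) (hχ : χ.IsPrimitive)
    (hGRH : ∀ ρ : ℂ, χ.LFunction ρ = 0 → 0 < ρ.re → ρ.re < 1 → |ρ.im| ≤ 5/8 →
      ρ.re = 1/2) :
    ‖deriv (DirichletCharacter.LFunction χ) 1 / DirichletCharacter.LFunction χ 1‖
      ≤ (5/2) * Real.log (Mq χ)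
        + 5 * Real.log (2 * Real.sqrt 3 / ((riemannZeta (9/4)).re / (riemannZeta (9/8)).re)) := by
  have hχ1 := ne_one_of_isPrimitive hq hχ
  exact LlogDeriv_at_one_bound_general hχ1 fun s hs ↦ LFunction_ne_zero_of_mem_ball hχ1 hGRH hs
end
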